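/- If two-variable first-order formulas φ(x₀) and ψ(x₀) are jointly FO²(τ)-consistent, then there are pointed models (𝔅₁, b₁) ⊨ φ and (𝔅₂, b₂) ⊨ ψ with (𝔅₁, b₁) ∼_{FO²,τ} (𝔅₂, b₂) whose domains have size at most double exponential in the combined size of φ and ψ. -/

import Mathlib

/-- A relational signature: relation symbols with arities, no function or
constant symbols. -/
structure Sig : Type 1 where
  Rel : Type
  arity : Rel → ℕ

/-- A relational structure for a signature. -/
structure Str (σ : Sig) : Type 1 where
  dom : Type
  interp : (R : σ.Rel) → (Fin (σ.arity R) → dom) → Prop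

/-- Update an assignment on all variables occurring in the list `ys`. -/
def updOn {D : Type} (v : ℕ → D) (ys : List ℕ) (w : ℕ → D) : ℕ → D :=
  fun n => if n ∈ ys then w n else v n

/-- `a ↦ b` is a partial `τ`-isomorphism between the tuples `a` (in `A`) and
`b` (in `B`). -/
def PartialIso {σ : Sig} (τ : Set σ.Rel) (A B : Str σ) {n : ℕ}
    (a : Fin n → A.dom) (b : Fin n → B.dom) : Prop :=
  (∀ i j : Fin n, a i = a j ↔ b i = b j) ∧
  ∀ R ∈ τ, ∀ t : Fin (σ.arity R) → Fin n, A.interp R (a ∘ t) ↔ B.interp R (b ∘ t)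

/-- Syntax of first-order formulas over named variables (relational
signature). -/
inductive Fml (σ : Sig) : Type
  | eq : ℕ → ℕ → Fml σ
  | rel : (R : σ.Rel) → (Fin (σ.arity R) → ℕ) → Fml σ
  | not : Fml σ → Fml σ
  | and : Fml σ → Fml σ → Fml σ
  | or : Fml σ → Fml σ → Fml σ
  | ex : ℕ → Fml σ → Fml σ
  | all : ℕ → Fml σ → Fml σ

namespace Fml

def Sat {σ : Sig} (A : Str σ) : Fml σ → (ℕ → A.dom) → Prop
  | .eq i j, v => v i = v j
  | .rel R t, v => A.interp R (fun k => v (t k))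
  | .not φ, v => ¬ Sat A φ v
  | .and φ ψ, v => Sat A φ v ∧ Sat A ψ v
  | .or φ ψ, v => Sat A φ v ∨ Sat A ψ v
  | .ex x φ, v => ∃ d, Sat A φ (Function.update v x d)
  | .all x φ, v => ∀ d, Sat A φ (Function.update v x d)

/-- Free variables. -/
def fv {σ : Sig} : Fml σ → Finset ℕ
  | .eq i j => {i, j}
  | .rel _ t => Finset.image t Finset.univ
  | .not φ => fv φ
  | .and φ ψ => fv φ ∪ fv ψ
  | .or φ ψ => fv φ ∪ fv ψ
  | .ex x φ => (fv φ).erase x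
  | .all x φ => (fv φ).erase x

/-- All (free and bound) variables. -/
def allVars {σ : Sig} : Fml σ → Finset ℕ
  | .eq i j => {i, j}
  | .rel _ t => Finset.image t Finset.univ
  | .not φ => allVars φ
  | .and φ ψ => allVars φ ∪ allVars ψ
  | .or φ ψ => allVars φ ∪ allVars ψ
  | .ex x φ => insert x (allVars φ)
  | .all x φ => insert x (allVars φ)

/-- The signature of a formula. -/
def sig {σ : Sig} : Fml σ → Set σ.Rel
  | .eq _ _ => ∅
  | .rel R _ => {R}
  | .not φ => sig φ
  | .and φ ψ => sig φ ∪ sig ψ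
  | .or φ ψ => sig φ ∪ sig ψ
  | .ex _ φ => sig φ
  | .all _ φ => sig φ

/-- Size of a formula. -/
def size {σ : Sig} : Fml σ → ℕ
  | .eq _ _ => 1
  | .rel R _ => 1 + σ.arity R
  | .not φ => size φ + 1
  | .and φ ψ => size φ + size ψ + 1
  | .or φ ψ => size φ + size ψ + 1
  | .ex _ φ => size φ + 1
  | .all _ φ => size φ + 1

/-- Quantifier-free formulas. -/
def QFree {σ : Sig} : Fml σ → Prop
  | .eq _ _ => True
  | .rel _ _ => True
  | .not φ => QFree φ
  | .and φ ψ => QFree φ ∧ QFree ψ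
  | .or φ ψ => QFree φ ∧ QFree ψ
  | .ex _ _ => False
  | .all _ _ => False

end Fml

/-- A two-variable formula: it uses only the two variables `0` ("x") and
`1` ("y"). -/
def IsFO2 {σ : Sig} (φ : Fml σ) : Prop := φ.allVars ⊆ {0, 1}

/-- The pointed structure `(A, a)` satisfies `φ` (the tuple `a` is assigned to
the variables `0, …, n-1`). -/
def SatTupleF {σ : Sig} (A : Str σ) (φ : Fml σ) {n : ℕ} (a : Fin n → A.dom) : Prop :=
  ∀ v : ℕ → A.dom, (∀ i : Fin n, v i = a i) → φ.Sat A v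

/-- Semantic entailment. -/
def FOEnt {σ : Sig} (φ ψ : Fml σ) : Prop :=
  ∀ (A : Str σ) (v : ℕ → A.dom), φ.Sat A v → ψ.Sat A v

/-- `S` is an FO²(τ)-bisimulation between `A` and `B`. -/
def FO2Bisim {σ : Sig} (τ : Set σ.Rel) (A B : Str σ) (S : Set (A.dom × B.dom)) : Prop :=
  (∀ a : A.dom, ∃ b, (a, b) ∈ S) ∧ (∀ b : B.dom, ∃ a, (a, b) ∈ S) ∧
  ∀ p ∈ S,
    (∀ a' : A.dom, ∃ b' : B.dom,
      PartialIso τ A B ![p.1, a'] ![p.2, b'] ∧ (a', b') ∈ S) ∧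
    (∀ b' : B.dom, ∃ a' : A.dom,
      PartialIso τ A B ![p.1, a'] ![p.2, b'] ∧ (a', b') ∈ S)

/-- `(A, a) ∼_{FO²,τ} (B, b)` for tuples of equal length. -/
def FO2Bisimilar {σ : Sig} (τ : Set σ.Rel) (A B : Str σ) {n : ℕ}
    (a : Fin n → A.dom) (b : Fin n → B.dom) : Prop :=
  PartialIso τ A B a b ∧ ∃ S, FO2Bisim τ A B S ∧ ∀ i, (a i, b i) ∈ S

/-- `(A, a)` and `(B, b)` satisfy exactly the same FO²(τ)-formulas. -/
def FO2Equiv {σ : Sig} (τ : Set σ.Rel) (A B : Str σ) {n : ℕ}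
    (a : Fin n → A.dom) (b : Fin n → B.dom) : Prop :=
  ∀ φ : Fml σ, IsFO2 φ → φ.sig ⊆ τ → φ.fv ⊆ Finset.range n →
    (SatTupleF A φ a ↔ SatTupleF B φ b)

/-- Joint FO²(τ)-consistency of two formulas with free variables among
`0, …, n-1`. -/
def JointFO2Con {σ : Sig} (τ : Set σ.Rel) (n : ℕ) (φ ψ : Fml σ) : Prop :=
  ∃ (A B : Str σ) (a : Fin n → A.dom) (b : Fin n → B.dom),
    SatTupleF A φ a ∧ SatTupleF B ψ b ∧ FO2Bisimilar τ A B a b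

/-!
A structure can be described by pairs: let `H p q` be the element of a model that `p` looks like in
front of `q`, and let `(p, q)` satisfy what `(H p q, H q p)` satisfies. This is consistent as soon
as `H p q = H q p` only for `p = q` and the one-type of `H p q` depends on `p` alone. Elements that
are unique of their type (kings) have one copy, all others can be copied freely; three copies of a
representative of every type per witness requirement, with witnesses moved cyclically, suffice,
which is the argument of Grädel, Kolaitis and Vardi for the exponential model property of FO².

To respect bisimilarity this is done twice. First the bisimilarity classes, shared by both models,
are viewed in this way, the type of a class being the set of one-types that occur in it, each marked
by whether it occurs more than once; there are doubly exponentially many such types. Over this view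
each model is unfolded into threads, which choose an element for the meeting with every node, and
a second application, with the pairs of a node and a one-type as types, makes the unfolding finite.
Lying over the same node of the common view is then a bisimulation between the resulting models.
-/

universe u

section PairView

variable {X Y Req : Type u} {T T' : Type*}

/-- A finite description of a structure over `X` by pairs: `h y y'` is the element of `X` that
`y` impersonates in front of `y'`. Distinct nodes are told apart by what they impersonate, and a
node impersonates only elements of one type, the types being recorded by `tp`. -/
structure IsPairView (tp : X → T) (h : Y → Y → X) : Prop where
  eq_swap_iff : ∀ y y', h y y' = h y' y ↔ y = y'
  tp_eq : ∀ y y', tp (h y y') = tp (h y y)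

theorem IsPairView.map {tp : X → T} {h : Y → Y → X} (hh : IsPairView tp h) (g : T → T') :
    IsPairView (g ∘ tp) h :=
  ⟨hh.eq_swap_iff, fun y y' => congrArg g (hh.tp_eq y y')⟩

open Classical in
theorem exists_eq_swap_iff (tp : X → T) (h : Y → Y → X)
    (hdup : ∀ y y', y ≠ y' → h y y' = h y' y → ∃ x, x ≠ h y y' ∧ tp x = tp (h y y')) :
    ∃ h' : Y → Y → X, (∀ y y', h' y y' = h' y' y ↔ y = y') ∧
      (∀ y y', tp (h' y y') = tp (h y y')) ∧
      (∀ y y', h y y' ≠ h y' y → h' y y' = h y y') ∧ ∀ y, h' y y = h y y := by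
  have hother (y y') : ∃ x, y ≠ y' → h y y' = h y' y → x ≠ h y y' ∧ tp x = tp (h y y') := by
    by_cases ht : y ≠ y' ∧ h y y' = h y' y
    · exact (hdup y y' ht.1 ht.2).imp fun _ hx _ _ => hx
    · exact ⟨h y y', fun hne heq => (ht ⟨hne, heq⟩).elim⟩
  choose other hother using hother
  let tie y y' := y ≠ y' ∧ h y y' = h y' y
  have eq_other {y y'} (ht : tie y y') (hlt : WellOrderingRel y y') :
      (if tie y y' ∧ WellOrderingRel y y' then other y y' else h y y') ≠
        if tie y' y ∧ WellOrderingRel y' y then other y' y else h y' y := by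
    rw [if_pos ⟨ht, hlt⟩, if_neg fun hgt => asymm_of _ hlt hgt.2, ← ht.2]
    exact (hother y y' ht.1 ht.2).1
  refine ⟨fun y y' => if tie y y' ∧ WellOrderingRel y y' then other y y' else h y y',
    fun y y' => ⟨fun heq => ?_, fun heq => by rw [heq]⟩, fun y y' => ?_,
    fun y y' hne => if_neg fun ht => hne ht.1.2, fun y => if_neg fun ht => ht.1.1 rfl⟩
  · by_contra hne
    by_cases ht : h y y' = h y' y
    · rcases trichotomous_of (WellOrderingRel (α := Y)) y y' with hlt | rfl | hlt
      · exact eq_other ⟨hne, ht⟩ hlt heq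
      · exact hne rfl
      · exact eq_other ⟨Ne.symm hne, ht.symm⟩ hlt heq.symm
    · simp only [tie, ht, Ne.symm ht, and_false, false_and, if_false] at heq
  · beta_reduce
    split_ifs with ht
    · exact (hother y y' ht.1.1 ht.1.2).2
    · rfl

/-- A *king* is the only element of its type. -/
def IsKing (tp : X → T) (x : X) : Prop := ∀ x', tp x' = tp x → x' = x

theorem IsKing.of_tp_eq {tp : X → T} {x x' : X} (hx : IsKing tp x) (h : tp x' = tp x) :
    IsKing tp x' :=
  (hx x' h).symm ▸ hx

/-- The elements that cannot be duplicated in front of `x`: `x` itself and the kings. -/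
def reserved (tp : X → T) (x : X) : Set X := {x' | x' = x ∨ IsKing tp x'}

/-- A pair view in which every node finds, without leaving its own disguise `h y y`, the reserved
elements, and all other witnesses `w (h y y) r` at pairwise distinct nodes. -/
structure IsWitnessedView (tp : X → T) (w : X → Req → X) (h : Y → Y → X) : Prop
    extends IsPairView tp h where
  exists_reserved : ∀ y, ∀ x ∈ reserved tp (h y y), ∃ y', h y y' = h y y ∧ h y' y = x
  exists_witness : ∀ y, ∃ f : {r // w (h y y) r ∉ reserved tp (h y y)} → Y,
    Function.Injective f ∧ ∀ r, h y (f r) = h y y ∧ h (f r) y = w (h y y) r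

theorem IsWitnessedView.exists_eq_witness {tp : X → T} {w : X → Req → X} {h : Y → Y → X}
    (hh : IsWitnessedView tp w h) (y : Y) (r : Req) :
    ∃ y', h y y' = h y y ∧ h y' y = w (h y y) r := by
  by_cases hr : w (h y y) r ∈ reserved tp (h y y)
  · exact hh.exists_reserved y _ hr
  · obtain ⟨f, -, hf⟩ := hh.exists_witness y
    exact ⟨f ⟨r, hr⟩, hf ⟨r, hr⟩⟩

/-- A set of elements rich enough to carry a witnessed view: `rep` picks an element of each type
in it, and it contains the witnesses of the kings. -/
structure IsCourt (tp : X → T) (w : X → Req → X) (rep : T → X) (P : Set X) : Prop where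
  tp_rep : ∀ x, tp (rep (tp x)) = tp x
  rep_mem : ∀ t, rep t ∈ P
  witness_mem : ∀ x, IsKing tp x → ∀ r, w x r ∈ P

theorem exists_finset_isCourt [Fintype T] [Fintype Req] (tp : X → T) (w : X → Req → X)
    (x₀ x₁ : X) :
    ∃ (rep : T → X) (P : Finset X),
      P.card ≤ Fintype.card T + Fintype.card T * Fintype.card Req + 2 ∧
      IsCourt tp w rep P ∧ x₀ ∈ P ∧ x₁ ∈ P := by
  classical
  have : Nonempty X := ⟨x₀⟩
  let rep := Function.invFun tp
  have tp_rep (x : X) : tp (rep (tp x)) = tp x := Function.invFun_eq ⟨x, rfl⟩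
  refine ⟨rep, Finset.univ.image rep ∪
    Finset.univ.image (fun q : T × Req => w (rep q.1) q.2) ∪ {x₀, x₁}, ?_,
    ⟨tp_rep, fun t => by simp, fun x hx r => ?_⟩, by simp, by simp⟩
  · refine (Finset.card_union_le _ _).trans (add_le_add ((Finset.card_union_le _ _).trans
      (add_le_add Finset.card_image_le ?_)) Finset.card_le_two)
    exact Finset.card_image_le.trans (Fintype.card_prod T Req).le
  · have hrep : w (rep (tp x)) r = w x r := by rw [hx _ (tp_rep x)]
    simp only [Finset.coe_union, Finset.coe_image, Set.mem_union, Set.mem_image]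
    exact Or.inl (Or.inr ⟨(tp x, r), by simp, hrep⟩)

/-- The nodes of the view carried by a court `P`: three copies of each element per request, except
that a king has a single copy. -/
def CourtNode (tp : X → T) (P : Set X) (r₀ : Req) : Type u :=
  {v : ↥P × Fin 3 × Req // IsKing tp v.1.1 → v.2 = (0, r₀)}

namespace CourtNode

variable {tp : X → T} {w : X → Req → X} {rep : T → X} {P : Set X} {r₀ : Req}

/-- The element of which a node is a copy. -/
def elt (y : CourtNode tp P r₀) : X := y.1.1.1

/-- The index of a copy modulo `3`; witnesses of the copies `c` are sought in the copies `c + 1`,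
so that no two nodes are witnesses of each other. -/
def copy (y : CourtNode tp P r₀) : Fin 3 := y.1.2.1

/-- The request that a node answers. -/
def req (y : CourtNode tp P r₀) : Req := y.1.2.2

/-- The first copy of an element. -/
def first (x : X) (hx : x ∈ P) : CourtNode tp P r₀ := ⟨(⟨x, hx⟩, 0, r₀), fun _ => rfl⟩

theorem eq_of_isKing {y y' : CourtNode tp P r₀} (hy : IsKing tp y.elt) (h : y.elt = y'.elt) :
    y = y' := by
  have hy' : IsKing tp y'.elt := h ▸ hy
  exact Subtype.ext (Prod.ext (Subtype.ext h) ((y.2 hy).trans (y'.2 hy').symm))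

variable (w rep) in
/-- `y'` is the copy that impersonates the witness of `y` for the request `y'.req`. -/
structure Serves (y' y : CourtNode tp P r₀) : Prop where
  not_isKing : ¬ IsKing tp y.elt
  not_isKing' : ¬ IsKing tp y'.elt
  copy_eq : y'.copy = y.copy + 1
  witness_ne : w y.elt y'.req ≠ y.elt
  elt_eq : y'.elt = rep (tp (w y.elt y'.req))

theorem Serves.not_serves {y y' : CourtNode tp P r₀} (h : Serves w rep y' y) :
    ¬ Serves w rep y y' := fun h' => by
  have hcopy := h.copy_eq
  rw [h'.copy_eq] at hcopy
  omega

variable (w rep) in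
open Classical in
/-- The view before ties are broken: a node impersonates its element, or the witness for which it
is responsible. -/
noncomputable def rawView (y y' : CourtNode tp P r₀) : X :=
  if Serves w rep y y' then w y'.elt y.req else y.elt

theorem rawView_of_serves {y y' : CourtNode tp P r₀} (h : Serves w rep y y') :
    rawView w rep y y' = w y'.elt y.req := if_pos h

theorem rawView_of_not_serves {y y' : CourtNode tp P r₀} (h : ¬ Serves w rep y y') :
    rawView w rep y y' = y.elt := if_neg h

theorem tp_rawView (hP : IsCourt tp w rep P) (y y' : CourtNode tp P r₀) :
    tp (rawView w rep y y') = tp y.elt := by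
  by_cases h : Serves w rep y y'
  · rw [rawView_of_serves h, h.elt_eq, hP.tp_rep]
  · rw [rawView_of_not_serves h]

theorem rawView_self (y : CourtNode tp P r₀) : rawView w rep y y = y.elt :=
  rawView_of_not_serves fun h => h.not_serves h

theorem not_isKing_of_rawView_eq_swap {y y' : CourtNode tp P r₀} (hne : y ≠ y')
    (h : rawView w rep y y' = rawView w rep y' y) : ¬ IsKing tp (rawView w rep y y') := by
  by_cases hs : Serves w rep y y'
  · rw [rawView_of_serves hs, rawView_of_not_serves hs.not_serves] at h
    exact (hs.witness_ne h).elim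
  by_cases hs' : Serves w rep y' y
  · rw [rawView_of_serves hs', rawView_of_not_serves hs] at h
    exact (hs'.witness_ne h.symm).elim
  rw [rawView_of_not_serves hs, rawView_of_not_serves hs'] at h
  rw [rawView_of_not_serves hs]
  exact fun hk => hne (eq_of_isKing hk h)

theorem exists_rawView_eq_reserved (hP : IsCourt tp w rep P) (y : CourtNode tp P r₀) {x : X}
    (hx : IsKing tp x) : ∃ y' : CourtNode tp P r₀,
      rawView w rep y y' = y.elt ∧ rawView w rep y' y = x := by
  refine ⟨first x (hx _ (hP.tp_rep x) ▸ hP.rep_mem _), ?_, ?_⟩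
  · exact rawView_of_not_serves fun h => h.not_isKing hx
  · exact rawView_of_not_serves fun h => h.not_isKing' hx

theorem exists_rawView_eq_witness (hP : IsCourt tp w rep P) (y : CourtNode tp P r₀) (r : Req)
    (hr : w y.elt r ∉ reserved tp y.elt) : ∃ y' : CourtNode tp P r₀,
      y'.req = r ∧ rawView w rep y y' = y.elt ∧ rawView w rep y' y = w y.elt r := by
  have hne : w y.elt r ≠ y.elt := fun h => hr (Or.inl h)
  have hnk : ¬ IsKing tp (w y.elt r) := fun h => hr (Or.inr h)
  by_cases hy : IsKing tp y.elt
  · refine ⟨⟨(⟨w y.elt r, hP.witness_mem _ hy r⟩, 0, r), fun hk => (hnk hk).elim⟩, rfl, ?_, ?_⟩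
    · exact rawView_of_not_serves fun h => h.not_isKing' hy
    · exact rawView_of_not_serves fun h => h.not_isKing hy
  · have hnk' : ¬ IsKing tp (rep (tp (w y.elt r))) := fun hk =>
      hnk (hk.of_tp_eq (hP.tp_rep _).symm)
    let y' : CourtNode tp P r₀ :=
      ⟨(⟨rep (tp (w y.elt r)), hP.rep_mem _⟩, y.copy + 1, r), fun hk => (hnk' hk).elim⟩
    have hs : Serves w rep y' y := ⟨hy, hnk', rfl, hne, rfl⟩
    exact ⟨y', rfl, rawView_of_not_serves hs.not_serves, rawView_of_serves hs⟩

theorem exists_isWitnessedView (hP : IsCourt tp w rep P) (r₀ : Req) {x₀ x₁ : X} (h₀ : x₀ ∈ P)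
    (h₁ : x₁ ∈ P) : ∃ h : CourtNode tp P r₀ → CourtNode tp P r₀ → X,
      IsWitnessedView tp w h ∧ ∃ y₀ y₁, h y₀ y₁ = x₀ ∧ h y₁ y₀ = x₁ := by
  obtain ⟨h, eq_swap_iff, tp_h, h_of_ne, h_self⟩ := exists_eq_swap_iff tp
    (rawView w rep : CourtNode tp P r₀ → CourtNode tp P r₀ → X) fun y y' hne heq => by
      have hnk := not_isKing_of_rawView_eq_swap hne heq
      simp only [IsKing, not_forall] at hnk
      obtain ⟨x, htp, hx⟩ := hnk
      exact ⟨x, hx, htp⟩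
  have self_eq (y) : h y y = y.elt := (h_self y).trans (rawView_self y)
  have h_of_raw {y y' x x'} (hx : rawView w rep y y' = x) (hx' : rawView w rep y' y = x')
      (hne : x' ≠ x) : h y y' = x ∧ h y' y = x' := by
    subst hx hx'
    exact ⟨h_of_ne _ _ (Ne.symm hne), h_of_ne _ _ hne⟩
  refine ⟨h, ⟨⟨eq_swap_iff, fun y y' => ?_⟩, fun y x hx => ?_, fun y => ?_⟩, ?_⟩
  · rw [tp_h, tp_h, tp_rawView hP, tp_rawView hP]
  · by_cases hxy : x = h y y
    · exact ⟨y, rfl, hxy.symm⟩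
    · obtain ⟨y', hy, hy'⟩ := exists_rawView_eq_reserved (r₀ := r₀) hP y (hx.resolve_left hxy)
      rw [self_eq] at hxy ⊢
      exact ⟨y', h_of_raw hy hy' hxy⟩
  · rw [self_eq]
    choose f hreq hf hf' using fun r : {r // w y.elt r ∉ reserved tp y.elt} =>
      exists_rawView_eq_witness hP y r.1 r.2
    refine ⟨f, fun r s hrs => Subtype.ext ?_, fun r => ?_⟩
    · rw [← hreq r, hrs, hreq s]
    · exact h_of_raw (hf r) (hf' r) fun heq => r.2 (Or.inl heq)
  · refine ⟨first x₀ h₀, first x₁ h₁, ?_⟩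
    by_cases heq : x₁ = x₀
    · subst heq
      exact ⟨self_eq _, self_eq _⟩
    · have not_serves (x x' : X) (hx : x ∈ P) (hx' : x' ∈ P) :
          ¬ Serves w rep (first x hx : CourtNode tp P r₀) (first x' hx') := fun hs =>
        absurd hs.copy_eq (by decide : (0 : Fin 3) ≠ 0 + 1)
      exact h_of_raw (rawView_of_not_serves (not_serves _ _ _ _))
        (rawView_of_not_serves (not_serves _ _ _ _)) heq

end CourtNode

theorem exists_finite_isWitnessedView [Fintype T] [Fintype Req] [Nonempty Req] (tp : X → T)
    (w : X → Req → X) (x₀ x₁ : X) :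
    ∃ (Y : Type u) (_ : Fintype Y) (h : Y → Y → X),
      Fintype.card Y ≤ (Fintype.card T + Fintype.card T * Fintype.card Req + 2) *
        (3 * Fintype.card Req) ∧
      IsWitnessedView tp w h ∧ ∃ y₀ y₁, h y₀ y₁ = x₀ ∧ h y₁ y₀ = x₁ := by
  classical
  obtain ⟨rep, P, hcard, hP, h₀, h₁⟩ := exists_finset_isCourt tp w x₀ x₁
  let r₀ : Req := Classical.arbitrary Req
  obtain ⟨h, hh, hpts⟩ := CourtNode.exists_isWitnessedView hP r₀ h₀ h₁
  let : Fintype (CourtNode tp (P : Set X) r₀) := Subtype.fintype _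
  refine ⟨_, inferInstance, h, (Fintype.card_subtype_le _).trans ?_, hh, hpts⟩
  rw [Fintype.card_prod, Fintype.card_prod, Fintype.card_fin]
  exact Nat.mul_le_mul_right _ ((Fintype.card_coe P).trans_le hcard)

end PairView

section Lift

variable {A X Y Z Λ Q ι : Type u}

/-- A labelling of pairs is left-determined if the label of `(a, b)` determines that of `(a, a)`,
which is called the type of `a`. -/
def LeftDetermined (lam : A → A → Λ) : Prop :=
  ∀ a b a' b', lam a b = lam a' b' → lam a a = lam a' a'

/-- The elements of class `q` and type `t`. -/
def fiber (lam : A → A → Λ) (cls : A → Q) (q : Q) (t : Λ) : Set A :=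
  {a | cls a = q ∧ lam a a = t}

/-- The types occurring in a class, and those occurring there more than once. -/
def profile (lam : A → A → Λ) (cls : A → Q) (q : Q) : Λ → Prop × Prop :=
  fun t => ((fiber lam cls q t).Nonempty, (fiber lam cls q t).Nontrivial)

/-- A thread at the node `y` of a view `h` of the classes prepares a future element for its
meetings with all nodes: in front of `y'` it will look like `x y'`, always of the same type, and
each of the pairs `(x y, d)` will be imitated in front of some node. -/
structure IsThread (lam : A → A → Λ) (cls : A → Q) (h : Y → Y → Q) (y : Y) (x : Y → A) :
    Prop where
  mem_fiber : ∀ y', x y' ∈ fiber lam cls (h y y') (lam (x y) (x y))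
  exists_imitation : ∀ d, ∃ y' d', cls d' = h y' y ∧ lam (x y') d' = lam (x y) d

/-- A view of the classes, compatible with their profiles, in which every element of the right
class lies on a thread. -/
structure IsThreadable (lam : A → A → Λ) (cls : A → Q) (h : Y → Y → Q) : Prop
    extends IsPairView (profile lam cls) h where
  exists_isThread : ∀ y y' a, cls a = h y y' → ∃ x, IsThread lam cls h y x ∧ x y' = a

theorem IsPairView.fiber_nonempty {lam : A → A → Λ} {cls : A → Q} {h : Y → Y → Q}
    (hh : IsPairView (profile lam cls) h) {y y' : Y} {t : Λ}
    (ht : (fiber lam cls (h y y') t).Nonempty) (y'' : Y) :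
    (fiber lam cls (h y y'') t).Nonempty := by
  have hp := congrArg Prod.fst (congrFun ((hh.tp_eq y y').trans (hh.tp_eq y y'').symm) t)
  exact hp.mp ht

theorem IsPairView.fiber_nontrivial {lam : A → A → Λ} {cls : A → Q} {h : Y → Y → Q}
    (hh : IsPairView (profile lam cls) h) {y y' : Y} {t : Λ}
    (ht : (fiber lam cls (h y y') t).Nontrivial) (y'' : Y) :
    (fiber lam cls (h y y'') t).Nontrivial := by
  have hp := congrArg Prod.snd (congrFun ((hh.tp_eq y y').trans (hh.tp_eq y y'').symm) t)
  exact hp.mp ht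

/-- The labels of the pairs leading from the class `q` out of the set `R` of classes. -/
def outLabels (lam : A → A → Λ) (cls : A → Q) (q : Q) (R : Set Q) : Set Λ :=
  {l | ∃ a b, cls a = q ∧ cls b ∉ R ∧ lam a b = l}

theorem exists_section_extending {R : Type*} {F : Y → Set A} (hF : ∀ y, (F y).Nonempty) {y₀ : Y}
    {f : A} (hf : f ∈ F y₀) {s : R → Y} (hs : Function.Injective s) (a : R → A) (e : A) :
    ∃ x : Y → A, (∀ y, x y ∈ F y) ∧ x y₀ = f ∧
      (∀ r, s r ≠ y₀ → a r ∈ F (s r) → x (s r) = a r) ∧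
      ∀ y ∉ Set.range s, y ≠ y₀ → e ∈ F y → x y = e := by
  have exists_value (y : Y) : ∃ v ∈ F y, (y = y₀ → v = f) ∧
      (∀ r, s r = y → y ≠ y₀ → a r ∈ F y → v = a r) ∧
      (y ∉ Set.range s → y ≠ y₀ → e ∈ F y → v = e) := by
    by_cases hy : y = y₀
    · subst hy
      exact ⟨f, hf, fun _ => rfl, fun _ _ h => (h rfl).elim, fun _ h => (h rfl).elim⟩
    by_cases hr : ∃ r, s r = y ∧ a r ∈ F y
    · obtain ⟨r, rfl, har⟩ := hr
      exact ⟨a r, har, fun h => (hy h).elim, fun r' hr' _ _ => congrArg a (hs hr'.symm),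
        fun h => (h ⟨r, rfl⟩).elim⟩
    obtain ⟨v, hv, v_eq⟩ : ∃ v ∈ F y, e ∈ F y → v = e := by
      by_cases he : e ∈ F y
      · exact ⟨e, he, fun _ => rfl⟩
      · exact (hF y).imp fun v hv => ⟨hv, fun h => (he h).elim⟩
    exact ⟨v, hv, fun h => (hy h).elim, fun r hsr _ har => (hr ⟨r, hsr, har⟩).elim,
      fun _ _ => v_eq⟩
  choose x hx hx₀ hxa hxe using exists_value
  exact ⟨x, hx, hx₀ y₀ rfl, fun r => hxa (s r) r rfl, hxe⟩

-- Two nodes `s (l, c)` are provided for each label, because `y'` may be one of them.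
theorem IsPairView.exists_isThread {lam : A → A → Λ} (hlam : LeftDetermined lam) {cls : A → Q}
    {h : Y → Y → Q} (hh : IsPairView (profile lam cls) h) {y : Y} {R : Set Q} (hy : h y y ∈ R)
    (hR : ∀ q ∈ R, ∃ y', h y y' = h y y ∧ h y' y = q)
    {s : outLabels lam cls (h y y) R × Bool → Y} (hs : Function.Injective s)
    (hsR : ∀ r, h (s r) y ∉ R)
    (hpair : ∀ r, ∃ a b, cls a = h y (s r) ∧ cls b = h (s r) y ∧ lam a b = r.1)
    {y' : Y} {f : A} (hf : cls f = h y y') :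
    ∃ x, IsThread lam cls h y x ∧ x y' = f := by
  choose a b ha hb hab using hpair
  have fiber_nonempty := hh.fiber_nonempty (t := lam f f) ⟨f, hf, rfl⟩
  obtain ⟨e, he, e_eq⟩ :
      ∃ e ∈ fiber lam cls (h y y) (lam f f), h y y' = h y y → f = e := by
    by_cases hy' : h y y' = h y y
    · exact ⟨f, ⟨hf.trans hy', rfl⟩, fun _ => rfl⟩
    · obtain ⟨e, he⟩ := fiber_nonempty y
      exact ⟨e, he, fun h => (hy' h).elim⟩
  obtain ⟨x, hx, x_eq_f, x_eq_a, x_eq⟩ :=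
    exists_section_extending fiber_nonempty ⟨hf, rfl⟩ hs a e
  have not_mem_range {y'' : Y} (hy'' : h y'' y ∈ R) : y'' ∉ Set.range s := by
    rintro ⟨r, rfl⟩
    exact hsR r hy''
  have x_eq_e {y'' : Y} (hyR : h y'' y ∈ R) (hyy : h y y'' = h y y) : x y'' = e := by
    by_cases hy' : y'' = y'
    · rw [hy', x_eq_f, e_eq (hy' ▸ hyy)]
    · exact x_eq y'' (not_mem_range hyR) hy' (hyy ▸ he)
  have x_self : x y = e := x_eq_e hy rfl
  refine ⟨x, ⟨fun y'' => ?_, fun d => ?_⟩, x_eq_f⟩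
  · rw [x_self, he.2]
    exact hx y''
  rw [x_self]
  by_cases hd : cls d ∈ R
  · obtain ⟨y'', hyy, hyd⟩ := hR _ hd
    exact ⟨y'', d, hyd.symm, by rw [x_eq_e (hyd ▸ hd) hyy]⟩
  · let l : outLabels lam cls (h y y) R := ⟨lam e d, e, d, he.1, hd, rfl⟩
    obtain ⟨c, hc⟩ : ∃ c, s (l, c) ≠ y' := by
      by_contra! hall
      exact absurd (hs ((hall true).trans (hall false).symm)) (by simp)
    have ht : lam (a (l, c)) (a (l, c)) = lam f f := (hlam _ _ _ _ (hab (l, c))).trans he.2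
    exact ⟨s (l, c), b (l, c), hb _, by rw [x_eq_a (l, c) hc ⟨ha _, ht⟩]; exact hab (l, c)⟩

/-- The label `l` occurs on a pair that leads from the class `q` out of `R` into the class `q'`. -/
def LeadsTo (lam : A → A → Λ) (cls : A → Q) (R : Set Q) (q : Q) (l : Λ) (q' : Q) : Prop :=
  q' ∉ R ∧ ∃ a b, cls a = q ∧ cls b = q' ∧ lam a b = l

theorem IsWitnessedView.isThreadable {T : Type*} {Req : Type u} {lam : A → A → Λ}
    (hlam : LeftDetermined lam) {cls : A → Q} {tp : Q → T} {w : Q → Req → Q} {h : Y → Y → Q}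
    (hh : IsWitnessedView tp w h) {g : T → Λ → Prop × Prop} (hg : g ∘ tp = profile lam cls)
    {ask : Λ × Bool → Req} (hask : Function.Injective ask)
    (hw : ∀ q l c q', LeadsTo lam cls (reserved tp q) q l q' →
      LeadsTo lam cls (reserved tp q) q l (w q (ask (l, c)))) :
    IsThreadable lam cls h := by
  have hview : IsPairView (profile lam cls) h := hg ▸ hh.toIsPairView.map g
  refine ⟨hview, fun y y' a ha => ?_⟩
  obtain ⟨f, f_inj, hf⟩ := hh.exists_witness y
  have leadsTo (r : outLabels lam cls (h y y) (reserved tp (h y y)) × Bool) :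
      LeadsTo lam cls (reserved tp (h y y)) (h y y) r.1 (w (h y y) (ask (r.1, r.2))) := by
    obtain ⟨⟨l, a, b, ha, hb, hl⟩, c⟩ := r
    exact hw _ _ _ (cls b) ⟨hb, a, b, ha, rfl, hl⟩
  let s r := f ⟨ask (r.1, r.2), (leadsTo r).1⟩
  have s_eq r : h y (s r) = h y y ∧ h (s r) y = w (h y y) (ask (r.1, r.2)) := hf _
  have s_inj : Function.Injective s := fun r r' heq => by
    have := hask (Subtype.ext_iff.1 (f_inj heq))
    simpa only [Prod.ext_iff, Subtype.ext_iff] using this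
  refine hview.exists_isThread hlam (Or.inl rfl) (hh.exists_reserved y) s_inj (fun r => ?_)
    (fun r => ?_) ha
  · exact (s_eq r).2 ▸ (leadsTo r).1
  · rw [(s_eq r).1, (s_eq r).2]
    exact (leadsTo r).2

theorem exists_finite_isThreadable [Fintype ι] [Nonempty ι] [Fintype Λ] [Nonempty Λ]
    {A : ι → Type u} {lam : ∀ i, A i → A i → Λ} (hlam : ∀ i, LeftDetermined (lam i))
    (cls : ∀ i, A i → Q) (q₀ q₁ : Q) {K : ℕ}
    (hK : K = 2 * Fintype.card ι * Fintype.card Λ) :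
    ∃ (Y : Type u) (_ : Fintype Y) (h : Y → Y → Q),
      Fintype.card Y ≤ (2 ^ K + 2 ^ K * K + 2) * (3 * K) ∧
      (∀ i, IsThreadable (lam i) (cls i) h) ∧ ∃ y₀ y₁, h y₀ y₁ = q₀ ∧ h y₁ y₀ = q₁ := by
  classical
  let tp (q : Q) (i : ι) := profile (lam i) (cls i) q
  have exists_w (q : Q) (r : ι × Λ × Bool) : ∃ q'', ∀ q',
      LeadsTo (lam r.1) (cls r.1) (reserved tp q) q r.2.1 q' →
      LeadsTo (lam r.1) (cls r.1) (reserved tp q) q r.2.1 q'' := by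
    by_cases hq : ∃ q', LeadsTo (lam r.1) (cls r.1) (reserved tp q) q r.2.1 q'
    · exact hq.imp fun _ hq' _ _ => hq'
    · exact ⟨q, fun q' hq' => (hq ⟨q', hq'⟩).elim⟩
  choose w hw using exists_w
  obtain ⟨Y, _, h, hcard, hh, hpts⟩ := exists_finite_isWitnessedView tp w q₀ q₁
  refine ⟨Y, inferInstance, h, hcard.trans_eq ?_, fun i => ?_, hpts⟩
  · have card_requests : Fintype.card (ι × Λ × Bool) = K := by
      rw [Fintype.card_prod, Fintype.card_prod, Fintype.card_bool, hK]
      ring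
    have card_types : Fintype.card (ι → Λ → Prop × Prop) = 2 ^ K := by
      rw [Fintype.card_fun, Fintype.card_fun, Fintype.card_prod, Fintype.card_prop, ← pow_two,
        ← pow_mul, ← pow_mul, hK]
      ring
    rw [card_requests, card_types]
  · exact hh.isThreadable (hlam i) (g := fun t => t i) rfl (ask := Prod.mk i)
      (Prod.mk_right_injective i) fun q l c => hw q (i, l, c)

/-- A view `H` lying over a view `h` of the classes: each `p` follows a thread `x` at `node p`, and
every pair of some `x y` and an element of the right class is realized at `p` in `H`. -/
structure IsLift (lam : A → A → Λ) (cls : A → Q) (h : Y → Y → Q) (node : X → Y)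
    (H : X → X → A) : Prop extends IsPairView (fun a => lam a a) H where
  cls_eq : ∀ p q, cls (H p q) = h (node p) (node q)
  exists_isThread : ∀ p, ∃ x, IsThread lam cls h (node p) x ∧ x (node p) = H p p ∧
    ∀ y v, cls v = h y (node p) → ∃ q, node q = y ∧ lam (H p q) (H q p) = lam (x y) v

theorem IsLift.exists_lam_eq {lam : A → A → Λ} {cls : A → Q} {h : Y → Y → Q} {node : X → Y}
    {H : X → X → A} (hH : IsLift lam cls h node H) (p : X) (d : A) :
    ∃ q, lam (H p q) (H q p) = lam (H p p) d := by
  obtain ⟨x, hx, x_self, hpairs⟩ := hH.exists_isThread p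
  obtain ⟨y, d', hd', hlam⟩ := hx.exists_imitation d
  obtain ⟨q, -, hq⟩ := hpairs y d' hd'
  exact ⟨q, by rw [hq, hlam, x_self]⟩

theorem IsLift.exists_iff {lam : A → A → Λ} {cls : A → Q} {h : Y → Y → Q}
    {node : X → Y} {H : X → X → A} (hH : IsLift lam cls h node H) {F : A → A → Prop}
    (hF : ∀ {a b a' b'}, lam a b = lam a' b' → F a b → F a' b')
    (hF_type : ∀ {a a'}, lam a a = lam a' a' → (∃ b, F a b) → ∃ b, F a' b) (p q : X) :
    (∃ r, F (H p r) (H r p)) ↔ ∃ b, F (H p q) b := by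
  constructor
  · rintro ⟨r, hr⟩
    exact hF_type ((hH.tp_eq p r).trans (hH.tp_eq p q).symm) ⟨_, hr⟩
  · intro hb
    obtain ⟨b, hb⟩ := hF_type (hH.tp_eq p q) hb
    obtain ⟨r, hr⟩ := hH.exists_lam_eq p b
    exact ⟨r, hF hr.symm hb⟩

theorem IsLift.forall_iff {lam : A → A → Λ} {cls : A → Q} {h : Y → Y → Q}
    {node : X → Y} {H : X → X → A} (hH : IsLift lam cls h node H) {F : A → A → Prop}
    (hF : ∀ {a b a' b'}, lam a b = lam a' b' → F a b → F a' b')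
    (hF_type : ∀ {a a'}, lam a a = lam a' a' → (∀ b, F a b) → ∀ b, F a' b) (p q : X) :
    (∀ r, F (H p r) (H r p)) ↔ ∀ b, F (H p q) b := by
  have hiff := hH.exists_iff (F := fun a b => ¬ F a b) (fun hlam => mt (hF hlam.symm))
    (fun hlam => by simpa only [not_forall] using mt (hF_type hlam.symm)) p q
  simpa only [← not_forall, not_iff_not] using hiff

/-- The threads over a view of the classes; they are the elements of its free lift. -/
structure Thread (lam : A → A → Λ) (cls : A → Q) (h : Y → Y → Q) : Type u where
  node : Y
  coord : Y → A
  isThread : IsThread lam cls h node coord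

namespace Thread

variable {lam : A → A → Λ} {cls : A → Q} {h : Y → Y → Q}

theorem node_eq_of_coord_eq (hh : IsThreadable lam cls h) {p q : Thread lam cls h}
    (heq : p.coord q.node = q.coord p.node) : p.node = q.node :=
  (hh.eq_swap_iff _ _).1 <| by
    rw [← (p.isThread.mem_fiber _).1, heq, (q.isThread.mem_fiber _).1]

theorem exists_ne_of_coord_eq (hh : IsThreadable lam cls h) {p q : Thread lam cls h}
    (hne : p ≠ q) (heq : p.coord q.node = q.coord p.node) : ∃ a, a ≠ p.coord q.node ∧
      (cls a, lam a a) = (cls (p.coord q.node), lam (p.coord q.node) (p.coord q.node)) := by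
  obtain ⟨y, x, hx⟩ := p
  obtain ⟨y', x', hx'⟩ := q
  obtain rfl : y = y' := node_eq_of_coord_eq hh heq
  dsimp only at heq ⊢
  obtain ⟨z, hz⟩ : ∃ z, x z ≠ x' z := by
    by_contra! hall
    obtain rfl := funext hall
    exact hne rfl
  have nontrivial : (fiber lam cls (h y z) (lam (x y) (x y))).Nontrivial :=
    ⟨x z, hx.mem_fiber z, x' z, heq ▸ hx'.mem_fiber z, hz⟩
  obtain ⟨a, ha, hne⟩ := (hh.fiber_nontrivial nontrivial y).exists_ne (x y)
  exact ⟨a, hne, Prod.ext (ha.1.trans (hx.mem_fiber y).1.symm) ha.2⟩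

/-- A view by threads that agrees with their coordinates wherever these tell the threads apart. -/
structure IsFreeView (H : Thread lam cls h → Thread lam cls h → A) : Prop where
  eq_swap_iff : ∀ p q, H p q = H q p ↔ p = q
  cls_type_eq : ∀ p q, (cls (H p q), lam (H p q) (H p q)) =
    (cls (p.coord q.node), lam (p.coord q.node) (p.coord q.node))
  eq_coord : ∀ p q, p.coord q.node ≠ q.coord p.node → H p q = p.coord q.node
  self_eq : ∀ p, H p p = p.coord p.node

theorem exists_isFreeView (hh : IsThreadable lam cls h) :
    ∃ H : Thread lam cls h → Thread lam cls h → A, IsFreeView H := by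
  obtain ⟨H, eq_swap_iff, hcls, eq_coord, self_eq⟩ :=
    exists_eq_swap_iff (fun a => (cls a, lam a a))
      (fun p q : Thread lam cls h => p.coord q.node) fun _ _ => exists_ne_of_coord_eq hh
  exact ⟨H, eq_swap_iff, hcls, eq_coord, self_eq⟩

theorem IsFreeView.exists_view_eq {H : Thread lam cls h → Thread lam cls h → A}
    (hH : IsFreeView H) (hh : IsThreadable lam cls h) (p : Thread lam cls h) {y : Y} {v : A}
    (hv : cls v = h y p.node) : ∃ q, q.node = y ∧ H p q = p.coord y ∧ H q p = v := by
  by_cases heq : p.coord y = v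
  · obtain rfl : p.node = y := (hh.eq_swap_iff _ _).1 <| by
      rw [← hv, ← heq, (p.isThread.mem_fiber y).1]
    exact ⟨p, rfl, hH.self_eq p, (hH.self_eq p).trans heq⟩
  · obtain ⟨x, hx, rfl⟩ := hh.exists_isThread y p.node v hv
    exact ⟨⟨y, x, hx⟩, rfl, hH.eq_coord p ⟨y, x, hx⟩ heq,
      hH.eq_coord ⟨y, x, hx⟩ p (Ne.symm heq)⟩

theorem IsFreeView.isLift {H : Thread lam cls h → Thread lam cls h → A} (hH : IsFreeView H)
    (hh : IsThreadable lam cls h) : IsLift lam cls h node H where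
  eq_swap_iff := hH.eq_swap_iff
  tp_eq p q := by
    have htype (r : Thread lam cls h) : lam (H p r) (H p r) =
        lam (p.coord p.node) (p.coord p.node) :=
      (congrArg Prod.snd (hH.cls_type_eq p r)).trans (p.isThread.mem_fiber _).2
    exact (htype q).trans (htype p).symm
  cls_eq p q := (congrArg Prod.fst (hH.cls_type_eq p q)).trans (p.isThread.mem_fiber _).1
  exists_isThread p := by
    refine ⟨p.coord, p.isThread, (hH.self_eq p).symm, fun y v hv => ?_⟩
    obtain ⟨q, hq, hpq, hqp⟩ := hH.exists_view_eq hh p hv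
    exact ⟨q, hq, by rw [hpq, hqp]⟩

end Thread

theorem IsLift.comp {lam : A → A → Λ} {cls : A → Q} {h : Y → Y → Q} {node : X → Y}
    {H : X → X → A} (hH : IsLift lam cls h node H) {w : X → Y × Λ → X}
    (hw : ∀ p q, node (w p (node q, lam (H p q) (H q p))) = node q ∧
      lam (H p (w p (node q, lam (H p q) (H q p)))) (H (w p (node q, lam (H p q) (H q p))) p) =
        lam (H p q) (H q p))
    {k : Z → Z → X} (hk : IsWitnessedView (fun p => (node p, lam (H p p) (H p p))) w k) :
    IsLift lam cls h (fun z => node (k z z)) fun z z' => H (k z z') (k z' z) := by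
  have node_eq (z z') : node (k z z') = node (k z z) := congrArg Prod.fst (hk.tp_eq z z')
  have type_eq (z z') : lam (H (k z z') (k z' z)) (H (k z z') (k z' z)) =
      lam (H (k z z) (k z z)) (H (k z z) (k z z)) :=
    (hH.tp_eq _ _).trans (congrArg Prod.snd (hk.tp_eq z z'))
  refine ⟨⟨fun z z' => (hH.eq_swap_iff _ _).trans (hk.eq_swap_iff z z'), type_eq⟩, fun z z' => ?_,
    fun z => ?_⟩
  · rw [hH.cls_eq, node_eq, node_eq z']
  · obtain ⟨x, hx, x_self, hpairs⟩ := hH.exists_isThread (k z z)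
    refine ⟨x, hx, x_self, fun y v hv => ?_⟩
    obtain ⟨q, rfl, hq⟩ := hpairs y v hv
    obtain ⟨z', hzz', hz'z⟩ := hk.exists_eq_witness z (node q, lam (H (k z z) q) (H q (k z z)))
    obtain ⟨hnode, hlam⟩ := hw (k z z) q
    exact ⟨z', by rw [← node_eq z' z, hz'z, hnode], by rw [hzz', hz'z, hlam, hq]⟩

theorem IsThreadable.exists_finite_isLift [Fintype Y] [Fintype Λ] {lam : A → A → Λ} {cls : A → Q}
    {h : Y → Y → Q} (hh : IsThreadable lam cls h) {y₀ y₁ : Y} {a₀ a₁ : A}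
    (h₀ : cls a₀ = h y₀ y₁) (h₁ : cls a₁ = h y₁ y₀) {N : ℕ}
    (hN : N = Fintype.card Y * Fintype.card Λ) :
    ∃ (X : Type u) (_ : Fintype X) (node : X → Y) (H : X → X → A) (x₀ x₁ : X),
      Fintype.card X ≤ (N + N * N + 2) * (3 * N) ∧ IsLift lam cls h node H ∧
      node x₀ = y₀ ∧ node x₁ = y₁ ∧ H x₀ x₁ = a₀ ∧ H x₁ x₀ = a₁ := by
  classical
  obtain ⟨H, hH⟩ := Thread.exists_isFreeView hh
  obtain ⟨x, hx, rfl⟩ := hh.exists_isThread y₀ y₁ a₀ h₀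
  let p₀ : Thread lam cls h := ⟨y₀, x, hx⟩
  obtain ⟨p₁, rfl, hp₀₁, hp₁₀⟩ := hH.exists_view_eq hh p₀ h₁
  have : Nonempty (Y × Λ) := ⟨(y₀, lam a₁ a₁)⟩
  have exists_w (p : Thread lam cls h) (r : Y × Λ) : ∃ q', ∀ q,
      (q.node, lam (H p q) (H q p)) = r → (q'.node, lam (H p q') (H q' p)) = r := by
    by_cases hq : ∃ q : Thread lam cls h, (q.node, lam (H p q) (H q p)) = r
    · exact hq.imp fun _ hq' _ _ => hq'
    · exact ⟨p, fun q' hq' => (hq ⟨q', hq'⟩).elim⟩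
  choose w hw using exists_w
  obtain ⟨X, _, k, hcard, hk, x₀, x₁, hk₀, hk₁⟩ := exists_finite_isWitnessedView
    (fun p => (p.node, lam (H p p) (H p p))) w p₀ p₁
  have node_eq (x x') : (k x x').node = (k x x).node := congrArg Prod.fst (hk.tp_eq x x')
  refine ⟨X, inferInstance, _, _, x₀, x₁, hcard.trans_eq ?_,
    (hH.isLift hh).comp (fun p q => Prod.ext_iff.1 (hw p _ q rfl)) hk, ?_⟩
  · rw [Fintype.card_prod, hN]
  · simp only [← node_eq x₀ x₁, ← node_eq x₁ x₀, hk₀, hk₁, hp₀₁, hp₁₀, p₀, and_self]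

theorem le_pow_five_of_le {M N F : ℕ} (hM : 4 ≤ M) (hN : N ≤ M)
    (hF : F ≤ (M + M * N + 2) * (3 * N)) : F ≤ M ^ 5 := by
  have hquad : M + M * M + 2 ≤ 2 * M ^ 2 := by nlinarith
  calc F ≤ (M + M * N + 2) * (3 * N) := hF
    _ ≤ (M + M * M + 2) * (3 * M) := by gcongr
    _ ≤ 2 * M ^ 2 * (3 * M) := by gcongr
    _ = 6 * M ^ 3 := by ring
    _ ≤ M ^ 2 * M ^ 3 := by gcongr; nlinarith
    _ = M ^ 5 := by ring

theorem exists_finite_isLift_family [Fintype ι] [Nonempty ι] [Fintype Λ] {A : ι → Type u}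
    {lam : ∀ i, A i → A i → Λ} (hlam : ∀ i, LeftDetermined (lam i)) {cls : ∀ i, A i → Q}
    {q₀ q₁ : Q} {a₀ a₁ : ∀ i, A i} (h₀ : ∀ i, cls i (a₀ i) = q₀) (h₁ : ∀ i, cls i (a₁ i) = q₁) :
    ∃ (Y : Type u) (h : Y → Y → Q) (y₀ y₁ : Y), ∀ i,
      ∃ (X : Type u) (_ : Fintype X) (node : X → Y) (H : X → X → A i) (x₀ x₁ : X),
        Fintype.card X ≤ 2 ^ (60 * Fintype.card ι * Fintype.card Λ) ∧
        IsLift (lam i) (cls i) h node H ∧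
        node x₀ = y₀ ∧ node x₁ = y₁ ∧ H x₀ x₁ = a₀ i ∧ H x₁ x₀ = a₁ i := by
  have : Nonempty Λ := (inferInstance : Nonempty ι).map fun i => lam i (a₀ i) (a₀ i)
  obtain ⟨K, hK⟩ : ∃ K, K = 2 * Fintype.card ι * Fintype.card Λ := ⟨_, rfl⟩
  have hΛK : Fintype.card Λ ≤ K := by
    rw [hK]
    exact Nat.le_mul_of_pos_left _ (Nat.mul_pos two_pos Fintype.card_pos)
  have hK2 : 2 ≤ K := by
    rw [hK, mul_assoc]
    exact Nat.le_mul_of_pos_right _ (Nat.mul_pos Fintype.card_pos Fintype.card_pos)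
  have hM : 4 ≤ 2 ^ K := Nat.pow_le_pow_right two_pos hK2
  have hKM : K ≤ 2 ^ K := Nat.lt_two_pow_self.le
  obtain ⟨Y, _, h, hYcard, hh, y₀, y₁, rfl, rfl⟩ := exists_finite_isThreadable hlam cls q₀ q₁ hK
  refine ⟨Y, h, y₀, y₁, fun i => ?_⟩
  obtain ⟨X, _, node, H, x₀, x₁, hXcard, hH⟩ := (hh i).exists_finite_isLift (h₀ i) (h₁ i) rfl
  refine ⟨X, inferInstance, node, H, x₀, x₁, ?_, hH⟩
  have hN : Fintype.card Y * Fintype.card Λ ≤ (2 ^ K) ^ 6 :=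
    calc Fintype.card Y * Fintype.card Λ ≤ (2 ^ K) ^ 5 * 2 ^ K :=
          Nat.mul_le_mul (le_pow_five_of_le hM hKM hYcard) (hΛK.trans hKM)
      _ = (2 ^ K) ^ 6 := by ring
  calc Fintype.card X ≤ ((2 ^ K) ^ 6) ^ 5 :=
        le_pow_five_of_le (hM.trans (Nat.le_self_pow (by norm_num) _)) hN (hXcard.trans (by gcongr))
    _ = 2 ^ (60 * Fintype.card ι * Fintype.card Λ) := by rw [← pow_mul, ← pow_mul, hK]; ring_nf

end Lift

section Bisimilarity

variable {σ : Sig} {τ : Set σ.Rel} {A B C : Str σ} {n m : ℕ}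

namespace PartialIso

variable {a : Fin n → A.dom} {b : Fin n → B.dom} {c : Fin n → C.dom}

theorem refl (a : Fin n → A.dom) : PartialIso τ A A a a :=
  ⟨fun _ _ => Iff.rfl, fun _ _ _ => Iff.rfl⟩

theorem symm (h : PartialIso τ A B a b) : PartialIso τ B A b a :=
  ⟨fun i j => (h.1 i j).symm, fun R hR t => (h.2 R hR t).symm⟩

theorem trans (h : PartialIso τ A B a b) (h' : PartialIso τ B C b c) : PartialIso τ A C a c :=
  ⟨fun i j => (h.1 i j).trans (h'.1 i j), fun R hR t => (h.2 R hR t).trans (h'.2 R hR t)⟩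

theorem comp (h : PartialIso τ A B a b) (e : Fin m → Fin n) :
    PartialIso τ A B (a ∘ e) (b ∘ e) :=
  ⟨fun i j => h.1 (e i) (e j), fun R hR t => h.2 R hR (e ∘ t)⟩

end PartialIso

namespace FO2Bisim

theorem refl (τ : Set σ.Rel) (A : Str σ) : FO2Bisim τ A A {p | p.1 = p.2} := by
  refine ⟨fun a => ⟨a, rfl⟩, fun a => ⟨a, rfl⟩, ?_⟩
  rintro ⟨a, b⟩ hab
  obtain rfl : a = b := hab
  exact ⟨fun a' => ⟨a', .refl _, rfl⟩, fun a' => ⟨a', .refl _, rfl⟩⟩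

theorem symm {S : Set (A.dom × B.dom)} (h : FO2Bisim τ A B S) :
    FO2Bisim τ B A {p | (p.2, p.1) ∈ S} := by
  refine ⟨h.2.1, h.1, fun p hp => ⟨fun b' => ?_, fun a' => ?_⟩⟩
  · exact ((h.2.2 _ hp).2 b').imp fun _ h' => ⟨h'.1.symm, h'.2⟩
  · exact ((h.2.2 _ hp).1 a').imp fun _ h' => ⟨h'.1.symm, h'.2⟩

theorem trans {S : Set (A.dom × B.dom)} {T : Set (B.dom × C.dom)} (hS : FO2Bisim τ A B S)
    (hT : FO2Bisim τ B C T) : FO2Bisim τ A C {p | ∃ b, (p.1, b) ∈ S ∧ (b, p.2) ∈ T} := by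
  refine ⟨fun a => ?_, fun c => ?_, ?_⟩
  · obtain ⟨b, hab⟩ := hS.1 a
    exact (hT.1 b).imp fun _ hbc => ⟨b, hab, hbc⟩
  · obtain ⟨b, hbc⟩ := hT.2.1 c
    exact (hS.2.1 b).imp fun _ hab => ⟨b, hab, hbc⟩
  · rintro ⟨a, c⟩ ⟨b, hab, hbc⟩
    refine ⟨fun a' => ?_, fun c' => ?_⟩
    · obtain ⟨b', hiso, hab'⟩ := (hS.2.2 _ hab).1 a'
      obtain ⟨c', hiso', hbc'⟩ := (hT.2.2 _ hbc).1 b'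
      exact ⟨c', hiso.trans hiso', b', hab', hbc'⟩
    · obtain ⟨b', hiso', hbc'⟩ := (hT.2.2 _ hbc).2 c'
      obtain ⟨a', hiso, hab'⟩ := (hS.2.2 _ hab).2 b'
      exact ⟨a', hiso.trans hiso', b', hab', hbc'⟩

theorem fo2Bisimilar_of_mem {S : Set (A.dom × B.dom)} (hS : FO2Bisim τ A B S) {a : A.dom}
    {b : B.dom} (hab : (a, b) ∈ S) : FO2Bisimilar τ A B ![a] ![b] := by
  obtain ⟨b', hiso, -⟩ := (hS.2.2 _ hab).1 a
  have hiso₀ : PartialIso τ A B ![a] ![b] := by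
    convert hiso.comp (0 : Fin 1 → Fin 2) using 1 <;> exact funext (Fin.forall_fin_one.2 rfl)
  exact ⟨hiso₀, S, hS, Fin.forall_fin_one.2 hab⟩

end FO2Bisim

namespace FO2Bisimilar

variable {a : Fin n → A.dom} {b : Fin n → B.dom} {c : Fin n → C.dom}

theorem refl (a : Fin n → A.dom) : FO2Bisimilar τ A A a a :=
  ⟨.refl a, _, .refl τ A, fun _ => rfl⟩

theorem symm : FO2Bisimilar τ A B a b → FO2Bisimilar τ B A b a
  | ⟨hiso, _, hS, hab⟩ => ⟨hiso.symm, _, hS.symm, hab⟩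

theorem trans : FO2Bisimilar τ A B a b → FO2Bisimilar τ B C b c → FO2Bisimilar τ A C a c
  | ⟨hiso, _, hS, hab⟩, ⟨hiso', _, hT, hbc⟩ =>
    ⟨hiso.trans hiso', _, hS.trans hT, fun i => ⟨b i, hab i, hbc i⟩⟩

theorem comp : FO2Bisimilar τ A B a b → (e : Fin m → Fin n) → FO2Bisimilar τ A B (a ∘ e) (b ∘ e)
  | ⟨hiso, S, hS, hab⟩, e => ⟨hiso.comp e, S, hS, fun i => hab (e i)⟩

theorem apply : FO2Bisimilar τ A B a b → (i : Fin n) → FO2Bisimilar τ A B ![a i] ![b i]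
  | ⟨_, _, hS, hab⟩, i => hS.fo2Bisimilar_of_mem (hab i)

theorem nonempty_iff : FO2Bisimilar τ A B a b → (Nonempty A.dom ↔ Nonempty B.dom)
  | ⟨_, _, hS, _⟩ => ⟨fun ⟨x⟩ => (hS.1 x).nonempty, fun ⟨y⟩ => (hS.2.1 y).nonempty⟩

theorem exists_forth {x : A.dom} {y : B.dom} :
    FO2Bisimilar τ A B ![x] ![y] → ∀ x', ∃ y', FO2Bisimilar τ A B ![x, x'] ![y, y']
  | ⟨_, S, hS, hxy⟩, x' => by
    obtain ⟨y', hiso, hxy'⟩ := (hS.2.2 _ (hxy 0)).1 x'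
    exact ⟨y', hiso, S, hS, Fin.forall_fin_two.2 ⟨hxy 0, hxy'⟩⟩

theorem exists_pair [Nonempty A.dom] (h : FO2Bisimilar τ A B a b) (hn : n ≤ 2) :
    ∃ u v, FO2Bisimilar τ A B u v ∧ u ∘ Fin.castLE hn = a ∧ v ∘ Fin.castLE hn = b := by
  cases n with
  | zero =>
    obtain ⟨-, S, hS, -⟩ := h
    obtain ⟨y, hxy⟩ := hS.1 (Classical.arbitrary A.dom)
    exact ⟨_, _, (hS.fo2Bisimilar_of_mem hxy).comp 0, Subsingleton.elim _ _, Subsingleton.elim _ _⟩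
  | succ n =>
    have ofNat_castLE (i : Fin (n + 1)) : Fin.ofNat (n + 1) (Fin.castLE hn i) = i := by simp
    exact ⟨_, _, h.comp fun i => Fin.ofNat (n + 1) i, funext fun i => congrArg a (ofNat_castLE i),
      funext fun i => congrArg b (ofNat_castLE i)⟩

end FO2Bisimilar

/-- Bisimilarity of the elements of a family of structures. -/
def bisimSetoid {ι : Type*} (τ : Set σ.Rel) (A : ι → Str σ) : Setoid (Σ i, (A i).dom) where
  r x y := FO2Bisimilar τ (A x.1) (A y.1) ![x.2] ![y.2]
  iseqv := ⟨fun _ => .refl _, .symm, .trans⟩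

end Bisimilarity

section Formulas

variable {σ : Sig}

namespace Fml

theorem sat_congr {A : Str σ} {γ : Fml σ} {v w : ℕ → A.dom} (h : ∀ n ∈ γ.fv, v n = w n) :
    γ.Sat A v ↔ γ.Sat A w := by
  induction γ generalizing v w with
  | eq i j => simp only [Sat, h i (by simp [fv]), h j (by simp [fv])]
  | rel R t => simp only [Sat, fun k => h (t k) (by simp [fv])]
  | not _ ih => exact not_congr (ih h)
  | and γ δ ihγ ihδ =>
    exact and_congr (ihγ fun n hn => h n (by simp [fv, hn]))
      (ihδ fun n hn => h n (by simp [fv, hn]))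
  | or γ δ ihγ ihδ =>
    exact or_congr (ihγ fun n hn => h n (by simp [fv, hn]))
      (ihδ fun n hn => h n (by simp [fv, hn]))
  | ex x γ ih =>
    refine exists_congr fun d => ih fun n hn => ?_
    by_cases hx : n = x
    · simp only [hx, Function.update_self]
    · simpa only [Function.update_of_ne hx] using h n (Finset.mem_erase.2 ⟨hx, hn⟩)
  | all x γ ih =>
    refine forall_congr' fun d => ih fun n hn => ?_
    by_cases hx : n = x
    · simp only [hx, Function.update_self]
    · simpa only [Function.update_of_ne hx] using h n (Finset.mem_erase.2 ⟨hx, hn⟩)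

theorem fv_subset_allVars (γ : Fml σ) : γ.fv ⊆ γ.allVars := by
  induction γ with
  | eq i j => exact subset_rfl
  | rel R t => exact subset_rfl
  | not _ ih => exact ih
  | and γ δ ihγ ihδ => exact Finset.union_subset_union ihγ ihδ
  | or γ δ ihγ ihδ => exact Finset.union_subset_union ihγ ihδ
  | ex x γ ih => exact (Finset.erase_subset _ _).trans (ih.trans (Finset.subset_insert _ _))
  | all x γ ih => exact (Finset.erase_subset _ _).trans (ih.trans (Finset.subset_insert _ _))

open Classical in
/-- The subformulas of a formula, including itself. -/
noncomputable def subformulas : Fml σ → Finset (Fml σ)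
  | .eq i j => {.eq i j}
  | .rel R t => {.rel R t}
  | .not γ => insert (.not γ) γ.subformulas
  | .and γ δ => insert (.and γ δ) (γ.subformulas ∪ δ.subformulas)
  | .or γ δ => insert (.or γ δ) (γ.subformulas ∪ δ.subformulas)
  | .ex x γ => insert (.ex x γ) γ.subformulas
  | .all x γ => insert (.all x γ) γ.subformulas

theorem mem_subformulas_self (γ : Fml σ) : γ ∈ γ.subformulas := by
  cases γ <;> simp [subformulas]

theorem card_subformulas_le (γ : Fml σ) : γ.subformulas.card ≤ γ.size := by
  classical
  induction γ with
  | eq i j => simp [subformulas, size]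
  | rel R t => simp [subformulas, size]
  | not γ ih | ex _ γ ih | all _ γ ih =>
    exact (Finset.card_insert_le _ _).trans (Nat.succ_le_succ ih)
  | and γ δ ihγ ihδ | or γ δ ihγ ihδ =>
    exact (Finset.card_insert_le _ _).trans
      (Nat.succ_le_succ ((Finset.card_union_le _ _).trans (add_le_add ihγ ihδ)))

theorem allVars_subset_of_mem_subformulas {γ δ : Fml σ} (h : δ ∈ γ.subformulas) :
    δ.allVars ⊆ γ.allVars := by
  classical
  induction γ with
  | eq i j => rw [Finset.mem_singleton.1 h]
  | rel R t => rw [Finset.mem_singleton.1 h]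
  | not γ ih =>
    rcases Finset.mem_insert.1 h with rfl | h
    · exact subset_rfl
    · exact ih h
  | and γ γ' ihγ ihγ' | or γ γ' ihγ ihγ' =>
    rcases Finset.mem_insert.1 h with rfl | h
    · exact subset_rfl
    rcases Finset.mem_union.1 h with h | h
    · exact (ihγ h).trans Finset.subset_union_left
    · exact (ihγ' h).trans Finset.subset_union_right
  | ex x γ ih | all x γ ih =>
    rcases Finset.mem_insert.1 h with rfl | h
    · exact subset_rfl
    · exact (ih h).trans (Finset.subset_insert _ _)

/-- Satisfaction under an assignment to the two variables `0` and `1`; it is meaningful for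
two-variable formulas only, as the remaining variables are read modulo `2`. -/
def Sat2 (A : Str σ) (γ : Fml σ) (u : Fin 2 → A.dom) : Prop :=
  γ.Sat A fun n => u (Fin.ofNat 2 n)

variable {A : Str σ} {γ : Fml σ}

theorem sat_iff_sat2 (hγ : IsFO2 γ) (v : ℕ → A.dom) : γ.Sat A v ↔ γ.Sat2 A fun i => v i :=
  sat_congr fun n hn => by
    rcases Finset.mem_insert.1 (hγ (γ.fv_subset_allVars hn)) with rfl | hn
    · rfl
    · rw [Finset.mem_singleton.1 hn]
      rfl

theorem sat_update_iff_sat2 {x : ℕ} (hx : x < 2) (hγ : IsFO2 γ) (u : Fin 2 → A.dom) (d : A.dom) :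
    γ.Sat A (Function.update (fun n => u (Fin.ofNat 2 n)) x d) ↔
      γ.Sat2 A (Function.update u (Fin.ofNat 2 x) d) := by
  rw [sat_iff_sat2 hγ]
  refine iff_of_eq (congrArg _ (funext fun i => ?_))
  lift x to Fin 2 using hx
  simp [Function.update_apply, Fin.val_inj]

theorem sat2_ex {x : ℕ} (h : IsFO2 (.ex x γ)) (u : Fin 2 → A.dom) :
    (Fml.ex x γ).Sat2 A u ↔ ∃ d, γ.Sat2 A (Function.update u (Fin.ofNat 2 x) d) := by
  obtain ⟨hx, hγ⟩ := Finset.insert_subset_iff.1 h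
  have hx : x < 2 := by
    simp only [Finset.mem_insert, Finset.mem_singleton] at hx
    omega
  exact exists_congr fun d => sat_update_iff_sat2 hx hγ u d

theorem sat2_all {x : ℕ} (h : IsFO2 (.all x γ)) (u : Fin 2 → A.dom) :
    (Fml.all x γ).Sat2 A u ↔ ∀ d, γ.Sat2 A (Function.update u (Fin.ofNat 2 x) d) := by
  obtain ⟨hx, hγ⟩ := Finset.insert_subset_iff.1 h
  have hx : x < 2 := by
    simp only [Finset.mem_insert, Finset.mem_singleton] at hx
    omega
  exact forall_congr' fun d => sat_update_iff_sat2 hx hγ u d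

end Fml

theorem satTupleF_comp_castLE {A : Str σ} {φ : Fml σ} {n : ℕ} (hn : n ≤ 2)
    (hφ : φ.fv ⊆ Finset.range n) (u : Fin 2 → A.dom) :
    SatTupleF A φ (u ∘ Fin.castLE hn) ↔ φ.Sat2 A u := by
  have ofNat_eq (i : Fin n) : Fin.ofNat 2 i = Fin.castLE hn i :=
    Fin.ext (Nat.mod_eq_of_lt (i.2.trans_le hn))
  refine ⟨fun h => h _ fun i => congrArg u (ofNat_eq i), fun h v hv => ?_⟩
  refine (Fml.sat_congr fun m hm => ?_).1 h
  have hi := hv ⟨m, Finset.mem_range.1 (hφ hm)⟩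
  exact (congrArg u (ofNat_eq ⟨m, _⟩)).trans hi.symm

end Formulas

section Restriction

variable {σ : Sig} {τ : Set σ.Rel} {A B : Str σ} {D D' : Type*} {n : ℕ} {Γ : Finset (Fml σ)}

/-- The tuple `s` satisfies the equalities between the arguments of some occurrence of `R` in
`Γ`. -/
def IsMentionable (Γ : Finset (Fml σ)) (R : σ.Rel) (s : Fin (σ.arity R) → D) : Prop :=
  ∃ t, Fml.rel R t ∈ Γ ∧ Function.FactorsThrough s t

theorem isMentionable_congr {R : σ.Rel} {s : Fin (σ.arity R) → D} {s' : Fin (σ.arity R) → D'}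
    (h : ∀ k l, s k = s l ↔ s' k = s' l) : IsMentionable Γ R s ↔ IsMentionable Γ R s' :=
  exists_congr fun _ => and_congr_right' <|
    forall₂_congr fun k l => imp_congr_right fun _ => h k l

/-- The structure `A` without the facts that the formulas in `Γ` cannot mention. -/
def Str.restrict (Γ : Finset (Fml σ)) (A : Str σ) : Str σ where
  dom := A.dom
  interp R s := A.interp R s ∧ IsMentionable Γ R s

/-- All facts of `A` can be mentioned by the formulas in `Γ`. -/
def Str.IsRelevant (Γ : Finset (Fml σ)) (A : Str σ) : Prop :=
  ∀ R s, A.interp R s → IsMentionable Γ R s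

theorem Str.isRelevant_restrict : (A.restrict Γ).IsRelevant Γ := fun _ _ h => h.2

theorem PartialIso.restrict {a : Fin n → A.dom} {b : Fin n → B.dom} (h : PartialIso τ A B a b) :
    PartialIso τ (A.restrict Γ) (B.restrict Γ) a b :=
  ⟨h.1, fun R hR t => and_congr (h.2 R hR t) (isMentionable_congr fun k l => h.1 (t k) (t l))⟩

theorem FO2Bisimilar.restrict {a : Fin n → A.dom} {b : Fin n → B.dom} :
    FO2Bisimilar τ A B a b → FO2Bisimilar τ (A.restrict Γ) (B.restrict Γ) a b
  | ⟨hiso, S, hS, hab⟩ => ⟨hiso.restrict, S, ⟨hS.1, hS.2.1, fun p hp =>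
      ⟨fun a' => ((hS.2.2 p hp).1 a').imp fun _ h => ⟨h.1.restrict, h.2⟩,
        fun b' => ((hS.2.2 p hp).2 b').imp fun _ h => ⟨h.1.restrict, h.2⟩⟩⟩, hab⟩

theorem Fml.sat_restrict {γ : Fml σ} (hγ : γ.subformulas ⊆ Γ) {v : ℕ → A.dom} :
    γ.Sat (A.restrict Γ) v ↔ γ.Sat A v := by
  classical
  induction γ generalizing v with
  | eq i j => rfl
  | rel R t =>
    refine and_iff_left ⟨t, hγ (mem_subformulas_self _), fun k l h => congrArg v h⟩
  | not γ ih => exact not_congr (ih (Finset.insert_subset_iff.1 hγ).2)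
  | and γ δ ihγ ihδ =>
    obtain ⟨hγ, hδ⟩ := Finset.union_subset_iff.1 (Finset.insert_subset_iff.1 hγ).2
    exact and_congr (ihγ hγ) (ihδ hδ)
  | or γ δ ihγ ihδ =>
    obtain ⟨hγ, hδ⟩ := Finset.union_subset_iff.1 (Finset.insert_subset_iff.1 hγ).2
    exact or_congr (ihγ hγ) (ihδ hδ)
  | ex x γ ih => exact exists_congr fun d => ih (Finset.insert_subset_iff.1 hγ).2
  | all x γ ih => exact forall_congr' fun d => ih (Finset.insert_subset_iff.1 hγ).2

end Restriction

section PairType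

variable {σ : Sig} {τ : Set σ.Rel} {A B : Str σ} {Γ : Finset (Fml σ)}

/-- What the formulas in `Γ` say about a pair: the formulas satisfied by each of its four
rearrangements, and whether its components are equal. -/
def pairType (Γ : Finset (Fml σ)) (A : Str σ) (a b : A.dom) :
    (Γ → (Fin 2 → Fin 2) → Prop) × Prop :=
  (fun γ e => γ.1.Sat2 A (![a, b] ∘ e), a = b)

theorem leftDetermined_pairType (Γ : Finset (Fml σ)) (A : Str σ) :
    LeftDetermined (pairType Γ A) := fun a b a' b' h => by
  have vec_self {D : Type} (x y : D) (e : Fin 2 → Fin 2) : ![x, x] ∘ e = ![x, y] ∘ fun _ => 0 :=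
    funext fun i => (Fin.forall_fin_two.2 ⟨rfl, rfl⟩ : ∀ j, ![x, x] j = x) (e i)
  refine Prod.ext (funext₂ fun γ e => ?_) (propext ⟨fun _ => rfl, fun _ => rfl⟩)
  have hγ := congrFun₂ (congrArg Prod.fst h) γ fun _ => 0
  simpa only [pairType, vec_self a b, vec_self a' b'] using hγ

theorem sat2_iff_of_pairType_eq {a b : A.dom} {a' b' : B.dom}
    (h : pairType Γ A a b = pairType Γ B a' b') {γ : Fml σ} (hγ : γ ∈ Γ) (e : Fin 2 → Fin 2) :
    γ.Sat2 A (![a, b] ∘ e) ↔ γ.Sat2 B (![a', b'] ∘ e) :=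
  iff_of_eq (congrFun₂ (congrArg Prod.fst h) ⟨γ, hγ⟩ e)

theorem eq_iff_of_pairType_eq {a b : A.dom} {a' b' : B.dom}
    (h : pairType Γ A a b = pairType Γ B a' b') (i j : Fin 2) :
    ![a, b] i = ![a, b] j ↔ ![a', b'] i = ![a', b'] j := by
  have hab : a = b ↔ a' = b' := iff_of_eq (congrArg Prod.snd h)
  fin_cases i <;> fin_cases j <;> simp [hab, eq_comm (a := b), eq_comm (a := b')]

theorem interp_of_pairType_eq (hΓ : ∀ γ ∈ Γ, IsFO2 γ) (hA : A.IsRelevant Γ) {a b : A.dom}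
    {a' b' : B.dom} (h : pairType Γ A a b = pairType Γ B a' b') {R : σ.Rel}
    {t : Fin (σ.arity R) → Fin 2} (hR : A.interp R (![a, b] ∘ t)) :
    B.interp R (![a', b'] ∘ t) := by
  obtain ⟨t₀, ht₀, hfac⟩ := hA R _ hR
  have ofNat_eq (k) : (Fin.ofNat 2 (t₀ k) : ℕ) = t₀ k := Nat.mod_eq_of_lt <| by
    have := hΓ _ ht₀ (Finset.mem_image_of_mem t₀ (Finset.mem_univ k))
    simp only [Finset.mem_insert, Finset.mem_singleton] at this
    omega
  let t₁ k := Fin.ofNat 2 (t₀ k)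
  have factors {k l} (hkl : t₁ k = t₁ l) : ![a, b] (t k) = ![a, b] (t l) :=
    hfac (by rw [← ofNat_eq k, ← ofNat_eq l]; exact congrArg Fin.val hkl)
  let e := Function.extend t₁ t 0
  have comp_e {D : Type} (u : Fin 2 → D) (hu : (u ∘ t).FactorsThrough t₁) :
      (fun k => u (e (t₁ k))) = u ∘ t := funext fun k => by
    rw [Function.apply_extend u, hu.extend_apply]
  have hsat := sat2_iff_of_pairType_eq h ht₀ e
  simp only [Fml.Sat2, Fml.Sat, Function.comp_apply] at hsat
  rw [comp_e ![a, b] fun _ _ => factors,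
    comp_e ![a', b'] fun k l hkl => (eq_iff_of_pairType_eq h (t k) (t l)).1 (factors hkl)] at hsat
  exact hsat.1 hR

theorem partialIso_of_pairType_eq (hΓ : ∀ γ ∈ Γ, IsFO2 γ) (hA : A.IsRelevant Γ)
    (hB : B.IsRelevant Γ) {a b : A.dom} {a' b' : B.dom}
    (h : pairType Γ A a b = pairType Γ B a' b') : PartialIso τ A B ![a, b] ![a', b'] :=
  ⟨eq_iff_of_pairType_eq h, fun _ _ _ =>
    ⟨interp_of_pairType_eq hΓ hA h, interp_of_pairType_eq hΓ hB h.symm⟩⟩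

end PairType

section Glue

variable {σ : Sig} {τ : Set σ.Rel} {A : Str σ} {X D : Type} {Γ : Finset (Fml σ)}

/-- The pair impersonated by the pair `u` in a view `H`. -/
def viewTuple (H : X → X → D) (u : Fin 2 → X) : Fin 2 → D := fun i => H (u i) (u i.rev)

theorem eq_rev_of_ne {i j : Fin 2} : i ≠ j → j = i.rev := by
  revert i j
  decide

theorem viewTuple_apply_of_ne (H : X → X → D) {u : Fin 2 → X} {i j : Fin 2} (h : u i ≠ u j) :
    viewTuple H u i = H (u i) (u j) := by
  rw [eq_rev_of_ne fun hij => h (congrArg u hij)]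
  rfl

theorem viewTuple_comp_eq_const (H : X → X → D) {n : ℕ} {u : Fin 2 → X} {t : Fin n → Fin 2} {x : X}
    (h : ∀ k, u (t k) = x) : ∃ y, viewTuple H u ∘ t = fun _ => H x y := by
  rcases isEmpty_or_nonempty (Fin n) with _ | ⟨⟨k⟩⟩
  · exact ⟨x, Subsingleton.elim _ _⟩
  · refine ⟨u (t k).rev, funext fun l => ?_⟩
    by_cases hkl : t k = t l
    · rw [← h l, hkl]
      rfl
    · simp only [Function.comp_apply, viewTuple, h, ← eq_rev_of_ne hkl,
        ← eq_rev_of_ne (Ne.symm hkl)]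

theorem viewTuple_update (H : X → X → D) (u : Fin 2 → X) (i : Fin 2) (x : X) :
    viewTuple H (Function.update u i x) =
      Function.update (fun _ => H (u i.rev) x) i (H x (u i.rev)) := by
  funext j
  by_cases hij : i = j
  · subst hij
    have rev_ne : i.rev ≠ i := by revert i; decide
    simp [viewTuple, rev_ne]
  · obtain rfl := eq_rev_of_ne hij
    simp [viewTuple, Ne.symm hij]

/-- The structure in which every pair looks like the pair of `A` that it impersonates in `H`. -/
abbrev glue (A : Str σ) (H : X → X → A.dom) : Str σ where
  dom := X
  interp R s := ∃ u : Fin 2 → X, ∃ t, s = u ∘ t ∧ A.interp R (viewTuple H u ∘ t)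

variable {H : X → X → A.dom}

theorem glue_interp_iff (hΓ : ∀ γ ∈ Γ, IsFO2 γ) (hA : A.IsRelevant Γ)
    (hH : IsPairView (fun a => pairType Γ A a a) H) (R : σ.Rel) (u : Fin 2 → X)
    (t : Fin (σ.arity R) → Fin 2) :
    (glue A H).interp R (u ∘ t) ↔ A.interp R (viewTuple H u ∘ t) := by
  refine ⟨?_, fun h => ⟨u, t, rfl, h⟩⟩
  rintro ⟨u', t', heq, h⟩
  by_cases hconst : ∃ x, ∀ k, u (t k) = x
  · obtain ⟨x, hx⟩ := hconst
    obtain ⟨y, hy⟩ := viewTuple_comp_eq_const H hx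
    obtain ⟨y', hy'⟩ := viewTuple_comp_eq_const H fun k => (congrFun heq k).symm.trans (hx k)
    have htype := (hH.tp_eq x y').trans (hH.tp_eq x y).symm
    rw [hy]
    rw [hy'] at h
    exact interp_of_pairType_eq (t := 0) hΓ hA htype h
  · push Not at hconst
    have hu (k) : u (t k) = u' (t' k) := congrFun heq k
    convert h using 1
    funext k
    obtain ⟨l, hl⟩ := hconst (u (t k))
    have hl' : u' (t' k) ≠ u' (t' l) := by rwa [← hu, ← hu, ne_comm]
    simp only [Function.comp_apply]
    rw [viewTuple_apply_of_ne H hl.symm, viewTuple_apply_of_ne H hl', hu, hu]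

theorem glue_partialIso (hΓ : ∀ γ ∈ Γ, IsFO2 γ) (hA : A.IsRelevant Γ)
    (hH : IsPairView (fun a => pairType Γ A a a) H) (u : Fin 2 → X) :
    PartialIso τ (glue A H) A u (viewTuple H u) := by
  refine ⟨fun i j => ?_, fun R _ t => glue_interp_iff hΓ hA hH R u t⟩
  by_cases hij : i = j
  · subst hij
    exact iff_of_true rfl rfl
  · obtain rfl := eq_rev_of_ne hij
    rw [viewTuple, viewTuple, Fin.rev_rev]
    exact (hH.eq_swap_iff (u i) (u i.rev)).symm

theorem update_viewTuple (H : X → X → D) (u : Fin 2 → X) (i : Fin 2) (a : D) :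
    Function.update (viewTuple H u) i a = Function.update (fun _ => H (u i.rev) (u i)) i a := by
  funext j
  by_cases hij : i = j
  · subst hij
    simp only [Function.update_self]
  · obtain rfl := eq_rev_of_ne hij
    simp only [Function.update_of_ne (Ne.symm hij), viewTuple, Fin.rev_rev]

theorem sat2_update_const_of_pairType_eq {B : Str σ} {γ : Fml σ} (hγ : γ ∈ Γ) (i : Fin 2)
    {a b : A.dom} {a' b' : B.dom} (h : pairType Γ A a b = pairType Γ B a' b') :
    γ.Sat2 A (Function.update (fun _ => a) i b) →
      γ.Sat2 B (Function.update (fun _ => a') i b') := by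
  have hsat := sat2_iff_of_pairType_eq h hγ (Function.update (fun _ => 0) i 1)
  rw [Function.comp_update, Function.comp_update] at hsat
  exact hsat.1

theorem sat2_const_of_pairType_eq {B : Str σ} {γ : Fml σ} (hγ : γ ∈ Γ) {a : A.dom} {a' : B.dom}
    (h : pairType Γ A a a = pairType Γ B a' a') : γ.Sat2 A (fun _ => a) → γ.Sat2 B (fun _ => a') :=
  (sat2_iff_of_pairType_eq h hγ fun _ => 0).1

variable {Y Q : Type} {cls : A.dom → Q} {h : Y → Y → Q} {node : X → Y}

theorem sat2_glue_ex (hΓ : ∀ γ ∈ Γ, IsFO2 γ) (hH : IsLift (pairType Γ A) cls h node H)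
    {x : ℕ} {γ : Fml σ} (hγ : γ ∈ Γ) (hxγ : .ex x γ ∈ Γ)
    (ih : ∀ u, γ.Sat2 (glue A H) u ↔ γ.Sat2 A (viewTuple H u)) (u : Fin 2 → X) :
    (Fml.ex x γ).Sat2 (glue A H) u ↔ (Fml.ex x γ).Sat2 A (viewTuple H u) := by
  let i := Fin.ofNat 2 x
  let z := u i.rev
  calc (Fml.ex x γ).Sat2 (glue A H) u
    _ ↔ ∃ y, γ.Sat2 (glue A H) (Function.update u i y) :=
      Fml.sat2_ex (A := glue A H) (hΓ _ hxγ) u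
    _ ↔ ∃ y, γ.Sat2 A (Function.update (fun _ => H z y) i (H y z)) :=
      exists_congr fun y => by rw [← viewTuple_update]; exact ih _
    _ ↔ ∃ a, γ.Sat2 A (Function.update (fun _ => H z (u i)) i a) :=
      hH.exists_iff (sat2_update_const_of_pairType_eq hγ i) (fun hlam => by
        simpa only [Fml.sat2_ex (hΓ _ hxγ)] using sat2_const_of_pairType_eq hxγ hlam) z (u i)
    _ ↔ (Fml.ex x γ).Sat2 A (viewTuple H u) := by
      simp only [Fml.sat2_ex (hΓ _ hxγ), update_viewTuple, i, z]

theorem sat2_glue_all (hΓ : ∀ γ ∈ Γ, IsFO2 γ) (hH : IsLift (pairType Γ A) cls h node H)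
    {x : ℕ} {γ : Fml σ} (hγ : γ ∈ Γ) (hxγ : .all x γ ∈ Γ)
    (ih : ∀ u, γ.Sat2 (glue A H) u ↔ γ.Sat2 A (viewTuple H u)) (u : Fin 2 → X) :
    (Fml.all x γ).Sat2 (glue A H) u ↔ (Fml.all x γ).Sat2 A (viewTuple H u) := by
  let i := Fin.ofNat 2 x
  let z := u i.rev
  calc (Fml.all x γ).Sat2 (glue A H) u
    _ ↔ ∀ y, γ.Sat2 (glue A H) (Function.update u i y) :=
      Fml.sat2_all (A := glue A H) (hΓ _ hxγ) u
    _ ↔ ∀ y, γ.Sat2 A (Function.update (fun _ => H z y) i (H y z)) :=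
      forall_congr' fun y => by rw [← viewTuple_update]; exact ih _
    _ ↔ ∀ a, γ.Sat2 A (Function.update (fun _ => H z (u i)) i a) :=
      hH.forall_iff (sat2_update_const_of_pairType_eq hγ i) (fun hlam => by
        simpa only [Fml.sat2_all (hΓ _ hxγ)] using sat2_const_of_pairType_eq hxγ hlam) z (u i)
    _ ↔ (Fml.all x γ).Sat2 A (viewTuple H u) := by
      simp only [Fml.sat2_all (hΓ _ hxγ), update_viewTuple, i, z]

theorem sat2_glue (hΓ : ∀ γ ∈ Γ, IsFO2 γ) (hA : A.IsRelevant Γ)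
    (hH : IsLift (pairType Γ A) cls h node H) {γ : Fml σ} (hγ : γ.subformulas ⊆ Γ)
    (u : Fin 2 → X) : γ.Sat2 (glue A H) u ↔ γ.Sat2 A (viewTuple H u) := by
  classical
  have hmem := hγ γ.mem_subformulas_self
  induction γ generalizing u with
  | eq i j => exact (glue_partialIso (τ := ∅) hΓ hA hH.toIsPairView u).1 _ _
  | rel R t => exact glue_interp_iff hΓ hA hH.toIsPairView R u fun k => Fin.ofNat 2 (t k)
  | not γ ih =>
    have hγ := (Finset.insert_subset_iff.1 hγ).2
    exact not_congr (ih hγ u (hγ γ.mem_subformulas_self))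
  | and γ δ ihγ ihδ =>
    obtain ⟨hγ, hδ⟩ := Finset.union_subset_iff.1 (Finset.insert_subset_iff.1 hγ).2
    exact and_congr (ihγ hγ u (hγ γ.mem_subformulas_self)) (ihδ hδ u (hδ δ.mem_subformulas_self))
  | or γ δ ihγ ihδ =>
    obtain ⟨hγ, hδ⟩ := Finset.union_subset_iff.1 (Finset.insert_subset_iff.1 hγ).2
    exact or_congr (ihγ hγ u (hγ γ.mem_subformulas_self)) (ihδ hδ u (hδ δ.mem_subformulas_self))
  | ex x γ ih =>
    have hγ := (Finset.insert_subset_iff.1 hγ).2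
    have hmem' := hγ γ.mem_subformulas_self
    exact sat2_glue_ex hΓ hH hmem' hmem (fun u => ih hγ u hmem') u
  | all x γ ih =>
    have hγ := (Finset.insert_subset_iff.1 hγ).2
    have hmem' := hγ γ.mem_subformulas_self
    exact sat2_glue_all hΓ hH hmem' hmem (fun u => ih hγ u hmem') u

end Glue

section GlueBisimilarity

variable {σ : Sig} {τ : Set σ.Rel} {Γ : Finset (Fml σ)} {A A' : Str σ} {X X' Y Q : Type}
  {cls : A.dom → Q} {cls' : A'.dom → Q} {h : Y → Y → Q} {node : X → Y} {node' : X' → Y}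
  {H : X → X → A.dom} {H' : X' → X' → A'.dom}

theorem viewTuple_pair {D : Type} (H : X → X → D) (x y : X) :
    viewTuple H ![x, y] = ![H x y, H y x] :=
  funext (Fin.forall_fin_two.2 ⟨rfl, rfl⟩)

theorem exists_partialIso_glue (hΓ : ∀ γ ∈ Γ, IsFO2 γ) (hA : A.IsRelevant Γ)
    (hA' : A'.IsRelevant Γ)
    (hcls : ∀ a a', cls a = cls' a' ↔ FO2Bisimilar τ A A' ![a] ![a'])
    (hH : IsLift (pairType Γ A) cls h node H) (hH' : IsLift (pairType Γ A') cls' h node' H')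
    {p : X} {p' : X'} (hp : node p = node' p') (q : X) : ∃ q',
      PartialIso τ (glue A H) (glue A' H') ![p, q] ![p', q'] ∧ node q = node' q' := by
  obtain ⟨x, hx, -, hpairs⟩ := hH'.exists_isThread p'
  have hfirst : FO2Bisimilar τ A A' ![H p q] ![x (node q)] := (hcls _ _).1 <| by
    rw [hH.cls_eq, (hx.mem_fiber _).1, hp]
  obtain ⟨v, hpair⟩ := hfirst.exists_forth (H q p)
  have hsecond : cls (H q p) = cls' v := (hcls _ _).2 (hpair.apply 1)
  obtain ⟨q', hq', htype⟩ := hpairs (node q) v <| by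
    rw [← hsecond, hH.cls_eq, hp]
  refine ⟨q', ?_, hq'.symm⟩
  have hglue := glue_partialIso (τ := τ) hΓ hA hH.toIsPairView ![p, q]
  have hglue' := glue_partialIso (τ := τ) hΓ hA' hH'.toIsPairView ![p', q']
  rw [viewTuple_pair] at hglue hglue'
  exact hglue.trans (hpair.1.trans ((partialIso_of_pairType_eq hΓ hA' hA' htype.symm).trans
    hglue'.symm))

theorem fo2Bisim_glue (hΓ : ∀ γ ∈ Γ, IsFO2 γ) (hA : A.IsRelevant Γ) (hA' : A'.IsRelevant Γ)
    (hcls : ∀ a a', cls a = cls' a' ↔ FO2Bisimilar τ A A' ![a] ![a'])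
    (hH : IsLift (pairType Γ A) cls h node H) (hH' : IsLift (pairType Γ A') cls' h node' H')
    {p₀ : X} {p₀' : X'} (hp₀ : node p₀ = node' p₀') :
    FO2Bisim τ (glue A H) (glue A' H') {p | node p.1 = node' p.2} := by
  have forth {p p'} (hp : node p = node' p') (q : X) :=
    exists_partialIso_glue hΓ hA hA' hcls hH hH' hp q
  have hcls' a' a : cls' a' = cls a ↔ FO2Bisimilar τ A' A ![a'] ![a] :=
    eq_comm.trans ((hcls a a').trans ⟨.symm, .symm⟩)
  have back {p p'} (hp : node p = node' p') (q' : X') : ∃ q,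
      PartialIso τ (glue A H) (glue A' H') ![p, q] ![p', q'] ∧ node q = node' q' :=
    (exists_partialIso_glue hΓ hA' hA hcls' hH' hH hp.symm q').imp fun _ hq =>
      ⟨hq.1.symm, hq.2.symm⟩
  exact ⟨fun q => (forth hp₀ q).imp fun _ hq => hq.2, fun q' => (back hp₀ q').imp fun _ hq => hq.2,
    fun p hp => ⟨forth hp, back hp⟩⟩

end GlueBisimilarity

section FiniteModels

variable {σ : Sig} {τ : Set σ.Rel} {Γ : Finset (Fml σ)} {ι : Type}

theorem exists_finite_glue_family [Fintype ι] [Nonempty ι] (hΓ : ∀ γ ∈ Γ, IsFO2 γ) {A : ι → Str σ}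
    (hA : ∀ i, (A i).IsRelevant Γ) {u : ∀ i, Fin 2 → (A i).dom}
    (hu : ∀ i j, FO2Bisimilar τ (A i) (A j) (u i) (u j)) :
    ∃ (B : ι → Str σ) (v : ∀ i, Fin 2 → (B i).dom),
      (∀ i, Finite (B i).dom ∧
        Nat.card (B i).dom ≤ 2 ^ (60 * Fintype.card ι * 2 ^ (4 * Γ.card + 1))) ∧
      (∀ i, ∀ γ : Fml σ, γ.subformulas ⊆ Γ → (γ.Sat2 (B i) (v i) ↔ γ.Sat2 (A i) (u i))) ∧
      ∀ i j, FO2Bisimilar τ (B i) (B j) (v i) (v j) := by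
  classical
  let cls i (a : (A i).dom) : Quotient (bisimSetoid τ A) := ⟦⟨i, a⟩⟧
  have cls_eq_iff i j a b : cls i a = cls j b ↔ FO2Bisimilar τ (A i) (A j) ![a] ![b] := Quotient.eq
  let i₀ := Classical.arbitrary ι
  obtain ⟨Y, h, y₀, y₁, hlift⟩ := exists_finite_isLift_family
    (fun i => leftDetermined_pairType Γ (A i)) (cls := cls)
    (fun i => (cls_eq_iff i i₀ _ _).2 ((hu i i₀).apply 0))
    (fun i => (cls_eq_iff i i₀ _ _).2 ((hu i i₀).apply 1))
  choose X _ node H x₀ x₁ hcard hH hx₀ hx₁ hH₀₁ hH₁₀ using hlift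
  have view_eq i : viewTuple (H i) ![x₀ i, x₁ i] = u i := by
    rw [viewTuple_pair, hH₀₁, hH₁₀]
    exact funext (Fin.forall_fin_two.2 ⟨rfl, rfl⟩)
  have card_pairType : Fintype.card ((Γ → (Fin 2 → Fin 2) → Prop) × Prop) =
      2 ^ (4 * Γ.card + 1) := by
    simp only [Fintype.card_prod, Fintype.card_fun, Fintype.card_prop, Fintype.card_fin,
      Fintype.card_coe, ← pow_mul, pow_succ]
    norm_num
  refine ⟨fun i => glue (A i) (H i), fun i => ![x₀ i, x₁ i], fun i => ⟨Finite.of_fintype (X i), ?_⟩,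
    fun i γ hγ => ?_, fun i j => ⟨?_, _, fo2Bisim_glue hΓ (hA i) (hA j) (cls_eq_iff i j)
      (hH i) (hH j) ((hx₀ i).trans (hx₀ j).symm), ?_⟩⟩
  · rw [← card_pairType, Nat.card_eq_fintype_card]
    exact hcard i
  · rw [sat2_glue hΓ (hA i) (hH i) hγ, view_eq]
  · have partialIso i := glue_partialIso (τ := τ) hΓ (hA i) (hH i).toIsPairView ![x₀ i, x₁ i]
    simp only [view_eq] at partialIso
    exact (partialIso i).trans ((hu i j).1.trans (partialIso j).symm)
  · exact Fin.forall_fin_two.2 ⟨(hx₀ i).trans (hx₀ j).symm, (hx₁ i).trans (hx₁ j).symm⟩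

theorem exists_finite_bisimilar_family [Fintype ι] [Nonempty ι] (hΓ : ∀ γ ∈ Γ, IsFO2 γ)
    {A : ι → Str σ} {u : ∀ i, Fin 2 → (A i).dom}
    (hu : ∀ i j, FO2Bisimilar τ (A i) (A j) (u i) (u j)) :
    ∃ (B : ι → Str σ) (v : ∀ i, Fin 2 → (B i).dom),
      (∀ i, Finite (B i).dom ∧
        Nat.card (B i).dom ≤ 2 ^ (60 * Fintype.card ι * 2 ^ (4 * Γ.card + 1))) ∧
      (∀ i, ∀ γ : Fml σ, γ.subformulas ⊆ Γ → (γ.Sat2 (B i) (v i) ↔ γ.Sat2 (A i) (u i))) ∧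
      ∀ i j, FO2Bisimilar τ (B i) (B j) (v i) (v j) := by
  obtain ⟨B, v, hB, hsat, hv⟩ := exists_finite_glue_family hΓ
    (fun i => Str.isRelevant_restrict (A := A i)) fun i j => (hu i j).restrict
  exact ⟨B, v, hB, fun i γ hγ => (hsat i γ hγ).trans (Fml.sat_restrict hγ), hv⟩

theorem exists_finite_bisimilar_pair {φ ψ : Fml σ} (hφ : IsFO2 φ) (hψ : IsFO2 ψ) {A B : Str σ}
    {u : Fin 2 → A.dom} {v : Fin 2 → B.dom} (huv : FO2Bisimilar τ A B u v) :
    ∃ (A' B' : Str σ) (u' : Fin 2 → A'.dom) (v' : Fin 2 → B'.dom),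
      Finite A'.dom ∧ Finite B'.dom ∧
      Nat.card A'.dom ≤ 2 ^ 2 ^ (4 * (φ.size + ψ.size) + 8) ∧
      Nat.card B'.dom ≤ 2 ^ 2 ^ (4 * (φ.size + ψ.size) + 8) ∧
      (φ.Sat2 A' u' ↔ φ.Sat2 A u) ∧ (ψ.Sat2 B' v' ↔ ψ.Sat2 B v) ∧
      FO2Bisimilar τ A' B' u' v' := by
  classical
  have hΓ : ∀ γ ∈ φ.subformulas ∪ ψ.subformulas, IsFO2 γ := fun γ hγ =>
    (Finset.mem_union.1 hγ).elim (fun h => (Fml.allVars_subset_of_mem_subformulas h).trans hφ)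
      fun h => (Fml.allVars_subset_of_mem_subformulas h).trans hψ
  have hcard : (φ.subformulas ∪ ψ.subformulas).card ≤ φ.size + ψ.size :=
    (Finset.card_union_le _ _).trans (add_le_add φ.card_subformulas_le ψ.card_subformulas_le)
  obtain ⟨C, w, hC, hsat, hw⟩ := exists_finite_bisimilar_family (ι := Bool) (τ := τ) hΓ
    (A := Bool.rec B A) (u := fun i => i.rec v u) <|
      Bool.forall_bool.2 ⟨Bool.forall_bool.2 ⟨.refl v, huv.symm⟩, Bool.forall_bool.2 ⟨huv, .refl u⟩⟩
  have hsize i : Nat.card (C i).dom ≤ 2 ^ 2 ^ (4 * (φ.size + ψ.size) + 8) :=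
    (hC i).2.trans <| Nat.pow_le_pow_right two_pos <|
      calc 60 * Fintype.card Bool * 2 ^ (4 * (φ.subformulas ∪ ψ.subformulas).card + 1)
        _ ≤ 2 ^ 7 * 2 ^ (4 * (φ.size + ψ.size) + 1) := by gcongr <;> simp
        _ = 2 ^ (4 * (φ.size + ψ.size) + 8) := by ring
  exact ⟨C true, C false, w true, w false, (hC true).1, (hC false).1, hsize true, hsize false,
    hsat true φ Finset.subset_union_left, hsat false ψ Finset.subset_union_right, hw true false⟩

end FiniteModels

/-- If two-variable formulas `φ(x₀)` and `ψ(x₀)` are jointly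
FO²(τ)-consistent, then there are FO²(τ)-bisimilar pointed models of `φ` and
`ψ` whose domains have size at most double exponential (`2^(2^(p(s)))` for a
fixed polynomial `p`) in the combined size `s` of `φ` and `ψ`. -/
theorem fo2_joint_consistency_double_exponential_models :
    ∃ p : Polynomial ℕ,
      ∀ (σ : Sig) (τ : Set σ.Rel) (n : ℕ) (φ ψ : Fml σ), n ≤ 2 →
        IsFO2 φ → IsFO2 ψ →
        φ.fv ⊆ Finset.range n → ψ.fv ⊆ Finset.range n →
        JointFO2Con τ n φ ψ →
        ∃ (B₁ B₂ : Str σ) (b₁ : Fin n → B₁.dom) (b₂ : Fin n → B₂.dom),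
          Finite B₁.dom ∧ Finite B₂.dom ∧
          Nat.card B₁.dom ≤ 2 ^ 2 ^ (p.eval (φ.size + ψ.size)) ∧
          Nat.card B₂.dom ≤ 2 ^ 2 ^ (p.eval (φ.size + ψ.size)) ∧
          SatTupleF B₁ φ b₁ ∧ SatTupleF B₂ ψ b₂ ∧
          FO2Bisimilar τ B₁ B₂ b₁ b₂ := by
  refine ⟨4 * Polynomial.X + 8, fun σ τ n φ ψ hn hφ hψ hφn hψn ⟨A, B, a, b, ha, hb, hab⟩ => ?_⟩
  rcases isEmpty_or_nonempty A.dom with hA | hA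
  · have hB : IsEmpty B.dom := not_nonempty_iff.1 fun hB => hA.false (hab.nonempty_iff.2 hB).some
    exact ⟨A, B, a, b, inferInstance, inferInstance, by simp, by simp, ha, hb, hab⟩
  · obtain ⟨u, v, huv, rfl, rfl⟩ := hab.exists_pair hn
    obtain ⟨A', B', u', v', hA', hB', hcardA, hcardB, hsatφ, hsatψ, huv'⟩ :=
      exists_finite_bisimilar_pair hφ hψ huv
    refine ⟨A', B', u' ∘ Fin.castLE hn, v' ∘ Fin.castLE hn, hA', hB', by simpa using hcardA,
      by simpa using hcardB, ?_, ?_, huv'.comp _⟩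
    · rwa [satTupleF_comp_castLE hn hφn, hsatφ, ← satTupleF_comp_castLE hn hφn]
    · rwa [satTupleF_comp_castLE hn hψn, hsatψ, ← satTupleF_comp_castLE hn hψn]
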